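/- Polynomial growth implies polynomial: assume m > 4 and let l ≥ 1 be an integer. Suppose f ∈ C²(ℝ^m×𝔹^m, ℋ_k) satisfies 𝒟_k f = 0 in ℝ^m × 𝔹^m and ∫_{B(0,R)} ∫_{𝔹^m} |f(x,ν)| dν dx = o(R^{l+m}) as R → ∞ (Lebesgue measure in both variables). Then D_x^α f ≡ 0 on ℝ^m × 𝔹^m for every multi-index α ∈ ℕ^m with |α| = l; equivalently, for each fixed ν ∈ 𝔹^m the function x ↦ f(x,ν) is a polynomial of degree at most l−1. -/

import Mathlib

noncomputable section

open MeasureTheory Metric Filter Topology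
open scoped RealInnerProductSpace

/-- `ℝ^m` as a Euclidean space. -/
abbrev Evec (m : ℕ) : Type := EuclideanSpace ℝ (Fin m)

/-- Partial derivative in the `i`-th coordinate direction. -/
def pdv {m : ℕ} (i : Fin m) (f : Evec m → ℝ) (x : Evec m) : ℝ :=
  fderiv ℝ f x (EuclideanSpace.single i 1)

/-- Euclidean Laplacian on `ℝ^m`. -/
def lapl {m : ℕ} (f : Evec m → ℝ) (x : Evec m) : ℝ :=
  ∑ i : Fin m, pdv i (pdv i f) x

/-- `p` is a real-valued polynomial function on `ℝ^m`, homogeneous of degree `k` and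
harmonic; i.e. `p ∈ ℋ_k`. -/
def IsHk (m k : ℕ) (p : Evec m → ℝ) : Prop :=
  (∃ P : MvPolynomial (Fin m) ℝ, ∀ x : Evec m, p x = MvPolynomial.eval (fun i => x i) P) ∧
  (∀ (c : ℝ) (x : Evec m), p (c • x) = c ^ k * p x) ∧
  (∀ x : Evec m, lapl p x = 0)

/-- The surface measure `dS` on the unit sphere `𝕊^{m-1}`, as a measure on `ℝ^m`. -/
def sphereM (m : ℕ) : Measure (Evec m) :=
  Measure.map Subtype.val ((volume : Measure (Evec m)).toSphere)

/-- `ω_m`, the surface area of the unit sphere `𝕊^{m-1}`. -/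
def omegaS (m : ℕ) : ℝ := (sphereM m Set.univ).toReal

/-- The constant `c_{m,k} = 2(m+2k-2)/((m-2)ω_m)`. -/
def cmk (m k : ℕ) : ℝ := 2 * ((m : ℝ) + 2 * k - 2) / (((m : ℝ) - 2) * omegaS m)

/-- The reflection `R_a(u) = u - 2⟨a,u⟩a/|a|²` (in Clifford notation `a u a/|a|²`). -/
def reflv {m : ℕ} (a u : Evec m) : Evec m :=
  u - (2 * ⟪a, u⟫ / ‖a‖ ^ 2) • a

/-- `dim ℋ_k`. -/
def hdim (m k : ℕ) : ℕ :=
  Nat.choose (m + k - 1) (m - 1) - Nat.choose (m + k - 3) (m - 1)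

/-- `Z` is the reproducing kernel `Z_k` of `ℋ_k` on the unit sphere: a symmetric,
rotation invariant kernel, bounded by `dim ℋ_k` on the unit ball, belonging to `ℋ_k`
in the first variable and reproducing elements of `ℋ_k` from their spherical values. -/
def IsZk (m k : ℕ) (Z : Evec m → Evec m → ℝ) : Prop :=
  (∀ v : Evec m, IsHk m k (fun u => Z u v)) ∧
  (∀ p : Evec m → ℝ, IsHk m k p → ∀ v : Evec m, (∫ u, Z u v * p u ∂(sphereM m)) = p v) ∧
  (∀ u v : Evec m, Z u v = Z v u) ∧
  (∀ u v : Evec m, ‖u‖ ≤ 1 → ‖v‖ ≤ 1 → |Z u v| ≤ (hdim m k : ℝ)) ∧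
  (∀ (A : Evec m ≃ₗᵢ[ℝ] Evec m) (u v : Evec m), Z (A u) (A v) = Z u v)

/-- The point `(x', y) ∈ ℝ^{d+1}` with first `d` coordinates `x'` and last coordinate `y`. -/
def upP (d : ℕ) (x' : Evec d) (y : ℝ) : Evec (d + 1) :=
  (EuclideanSpace.equiv (Fin (d + 1)) ℝ).symm
    (Fin.snoc (⇑(EuclideanSpace.equiv (Fin d) ℝ) x') y)

/-- The first `d` coordinates of a point of `ℝ^{d+1}`. -/
def downP (d : ℕ) (x : Evec (d + 1)) : Evec d :=
  (EuclideanSpace.equiv (Fin d) ℝ).symm (fun i => x (Fin.castSucc i))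

/-- The last coordinate of a point of `ℝ^{d+1}`. -/
def lastP (d : ℕ) (x : Evec (d + 1)) : ℝ := x (Fin.last d)

/-- The Poisson kernel `P_H` for bosonic Laplacians in the upper half-space `ℝ^{d+1}_+`,
`P_H(x,t,u,v) = c_{m,k} (y/|x-t|^m) Z_k(R_{x-t}(u), v)` with `m = d+1`, `x = (x',y)`,
`t = (t',0)`. -/
def PH (d k : ℕ) (Z : Evec (d + 1) → Evec (d + 1) → ℝ) (x' : Evec d) (y : ℝ)
    (t' : Evec d) (u v : Evec (d + 1)) : ℝ :=
  cmk (d + 1) k * (y / ‖upP d x' y - upP d t' 0‖ ^ (d + 1)) *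
    Z (reflv (upP d x' y - upP d t' 0) u) v

/-- The Poisson integral `P_H[f]` in the upper half-space. -/
def PHint (d k : ℕ) (Z : Evec (d + 1) → Evec (d + 1) → ℝ)
    (f : Evec d → Evec (d + 1) → ℝ) (x' : Evec d) (y : ℝ) (v : Evec (d + 1)) : ℝ :=
  ∫ t' : Evec d, (∫ u, PH d k Z x' y t' u v * f t' u ∂(sphereM (d + 1)))

/-- The Poisson kernel `P_B` for bosonic Laplacians in the unit ball. -/
def PB (m k : ℕ) (Z : Evec m → Evec m → ℝ) (x ζ ω ν : Evec m) : ℝ :=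
  (cmk m k / 2) * ((1 - ‖x‖ ^ 2) / ‖x - ζ‖ ^ m) * Z (reflv (x - ζ) ω) ν

/-- The Poisson integral `P_B[h]` in the unit ball. -/
def PBint (m k : ℕ) (Z : Evec m → Evec m → ℝ) (h : Evec m → Evec m → ℝ)
    (x ν : Evec m) : ℝ :=
  ∫ ζ, (∫ ω, PB m k Z x ζ ω ν * h ζ ω ∂(sphereM m)) ∂(sphereM m)

/-- Partial derivative in the first (`x`) variable. -/
def pd1 {m : ℕ} (i : Fin m) (f : Evec m → Evec m → ℝ) : Evec m → Evec m → ℝ :=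
  fun x u => fderiv ℝ (fun x₁ => f x₁ u) x (EuclideanSpace.single i 1)

/-- Partial derivative in the second (`u`) variable. -/
def pd2 {m : ℕ} (i : Fin m) (f : Evec m → Evec m → ℝ) : Evec m → Evec m → ℝ :=
  fun x u => fderiv ℝ (fun u₁ => f x u₁) u (EuclideanSpace.single i 1)

/-- The bosonic Laplacian `𝒟_k`. -/
def Dk (m k : ℕ) (f : Evec m → Evec m → ℝ) : Evec m → Evec m → ℝ := fun x u =>
  (∑ i : Fin m, pd1 i (pd1 i f) x u)
    - (4 / ((m : ℝ) + 2 * k - 2)) *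
        ∑ i : Fin m, ∑ j : Fin m, u i * pd1 i (pd2 j (pd1 j f)) x u
    + (4 * ‖u‖ ^ 2 / (((m : ℝ) + 2 * k - 2) * ((m : ℝ) + 2 * k - 4))) *
        ∑ i : Fin m, ∑ j : Fin m, pd2 i (pd1 i (pd2 j (pd1 j f))) x u

/-- `f ∈ C²(Ω×𝔹^m, ℋ_k)`: twice continuously differentiable on `Ω × 𝔹^m` and, for each
fixed `x ∈ Ω`, coinciding in the second variable with an element of `ℋ_k`. -/
def C2Hk (m k : ℕ) (Ω : Set (Evec m)) (f : Evec m → Evec m → ℝ) : Prop :=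
  ContDiffOn ℝ 2 (fun q : Evec m × Evec m => f q.1 q.2) (Ω ×ˢ ball (0 : Evec m) 1) ∧
  ∀ x ∈ Ω, ∃ q, IsHk m k q ∧ ∀ u ∈ closedBall (0 : Evec m) 1, f x u = q u

/-- The `L^p` norm `(∫_{ℝ^{m-1}} ∫_{𝕊^{m-1}} |f(x',u)|^p dS(u) dx')^{1/p}` (`m = d+1`),
valued in `ℝ≥0∞`. -/
def lpH (d : ℕ) (p : ℝ) (f : Evec d → Evec (d + 1) → ℝ) : ENNReal :=
  (∫⁻ x' : Evec d, ∫⁻ u, ENNReal.ofReal (|f x' u| ^ p) ∂(sphereM (d + 1))) ^ (1 / p)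

/-- `f ∈ L^p(ℝ^{m-1}×𝔹^m, ℋ_k)` (`m = d+1`). -/
def MemLpH (d k : ℕ) (p : ℝ) (f : Evec d → Evec (d + 1) → ℝ) : Prop :=
  Measurable (fun q : Evec d × Evec (d + 1) => f q.1 q.2) ∧
  (∀ x' : Evec d, ∃ q, IsHk (d + 1) k q ∧
    ∀ u ∈ closedBall (0 : Evec (d + 1)) 1, f x' u = q u) ∧
  lpH d p f < ⊤

/-- The `L^p` norm `(∫_{𝕊^{m-1}} ∫_{𝕊^{m-1}} |h(ζ,ω)|^p dS(ω) dS(ζ))^{1/p}`,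
valued in `ℝ≥0∞`. -/
def lpS (m : ℕ) (p : ℝ) (h : Evec m → Evec m → ℝ) : ENNReal :=
  (∫⁻ ζ, ∫⁻ ω, ENNReal.ofReal (|h ζ ω| ^ p) ∂(sphereM m) ∂(sphereM m)) ^ (1 / p)

/-- `h ∈ L^p(𝕊^{m-1}×𝔹^m, ℋ_k)`. -/
def MemLpS (m k : ℕ) (p : ℝ) (h : Evec m → Evec m → ℝ) : Prop :=
  Measurable (fun q : Evec m × Evec m => h q.1 q.2) ∧
  (∀ ζ : Evec m, ‖ζ‖ = 1 → ∃ q, IsHk m k q ∧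
    ∀ ω ∈ closedBall (0 : Evec m) 1, h ζ ω = q ω) ∧
  lpS m p h < ⊤

/-- Iterated partial derivative `D_x^α` in the first variable, for a multi-index `α ∈ ℕ^m`. -/
def Dx {m : ℕ} (α : Fin m → ℕ) (f : Evec m → Evec m → ℝ) : Evec m → Evec m → ℝ :=
  (List.finRange m).foldr (fun i g => (pd1 i)^[α i] g) f

/-- Iterated partial derivative `D_ν^β` in the second variable, for a multi-index `β ∈ ℕ^m`. -/
def Dv {m : ℕ} (β : Fin m → ℕ) (f : Evec m → Evec m → ℝ) : Evec m → Evec m → ℝ :=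
  (List.finRange m).foldr (fun i g => (pd2 i)^[β i] g) f

/-!
Write `T = ∑ ∂_{u_j} ∂_{x_j}`. Commuting powers of `T` past `𝒟_k f = 0` expresses `Δ_x T^n f`
through `T^(n + 1) f` and `T^(n + 2) f`. As `f` has degree at most `k` in `u`, `T^(k + 1) f = 0`,
and descending induction on `n` gives `Δ_x^(k + 1 - n) T^n f = 0`; so `f` is polyharmonic of order
`k + 1` in `x`, in the weak sense since `f` is only `C²`. By Pizzetti's formula the spherical
means of a polyharmonic function are polynomials of bounded degree in the radius, so extrapolating
them to radius `0` produces one smooth compactly supported kernel which, rescaled to any size `R`,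
reproduces all polyharmonic functions of that order. Differentiating the kernel instead of the
function bounds an `l`-th derivative by `R^(-l-m)` times the integral over a ball of radius
`O(R)`.
-/

open scoped ContDiff

section Ladder

variable {𝕜 M : Type*} [Field 𝕜] [AddCommGroup M] [Module 𝕜 M] {D X Q L : Module.End 𝕜 M}

theorem ladder_relation (hDX : D * X = L + X * D) (hDQ : D * Q = (2 : 𝕜) • X + Q * D)
    (hDL : Commute D L) {a : 𝕜} {T : M}
    (hT : (a * (a - 2)) • L T - (4 * (a - 2)) • X (D T) + (4 : 𝕜) • Q (D (D T)) = 0) (n : ℕ) :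
    ((a - 2 * n) * (a - 2 - 2 * n)) • L ((D ^ n) T) - (4 * (a - 2 - 2 * n)) • X ((D ^ (n + 1)) T)
      + (4 : 𝕜) • Q ((D ^ (n + 2)) T) = 0 := by
  induction n with
  | zero => simpa [pow_succ] using hT
  | succ n ih =>
    have hX S : D (X S) = L S + X (D S) := LinearMap.congr_fun hDX S
    have hQ S : D (Q S) = (2 : 𝕜) • X S + Q (D S) := LinearMap.congr_fun hDQ S
    have hL S : D (L S) = L (D S) := LinearMap.congr_fun hDL.eq S
    have hpow (j : ℕ) : D ((D ^ j) T) = (D ^ (j + 1)) T := by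
      rw [pow_succ', Module.End.mul_apply]
    have h := congrArg D ih
    simp only [map_add, map_sub, map_smul, map_zero, hX, hQ, hL, hpow] at h
    push_cast
    rw [← h]
    module

theorem ladder_vanishing (hDX : D * X = L + X * D) (hDQ : D * Q = (2 : 𝕜) • X + Q * D)
    (hDL : Commute D L) (hXL : Commute X L) (hQL : Commute Q L) {a : 𝕜} {k : ℕ}
    (ha : ∀ n ≤ k, (a - 2 * n) * (a - 2 - 2 * n) ≠ 0) {T : M}
    (hT : (a * (a - 2)) • L T - (4 * (a - 2)) • X (D T) + (4 : 𝕜) • Q (D (D T)) = 0)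
    (hnil : (D ^ (k + 1)) T = 0) : (L ^ (k + 1)) T = 0 := by
  have hX j S : (L ^ j) (X S) = X ((L ^ j) S) := (LinearMap.congr_fun (hXL.pow_right j).eq S).symm
  have hQ j S : (L ^ j) (Q S) = Q ((L ^ j) S) := (LinearMap.congr_fun (hQL.pow_right j).eq S).symm
  suffices key : ∀ n ≤ k + 1, (L ^ (k + 1 - n)) ((D ^ n) T) = 0 ∧
      (L ^ (k + 1 - n)) ((D ^ (n + 1)) T) = 0 by
    simpa using (key 0 (by lia)).1
  intro n hn
  induction hn using Nat.decreasingInduction with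
  | self => simp [pow_succ' D (k + 1), hnil]
  | of_succ n hn ih =>
    have e : k + 1 - n = (k + 1 - (n + 1)) + 1 := by lia
    refine ⟨?_, by rw [e, pow_succ', Module.End.mul_apply, ih.1, map_zero]⟩
    have h := congrArg (L ^ (k + 1 - (n + 1))) (ladder_relation hDX hDQ hDL hT n)
    simp only [map_add, map_sub, map_smul, map_zero, hX, hQ, ih.1, ih.2, smul_zero, sub_zero,
      add_zero] at h
    rw [e, pow_succ, Module.End.mul_apply]
    exact (smul_eq_zero.mp h).resolve_left (ha n (by lia))

end Ladder

section Bosonic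

open MvPolynomial

variable {𝕜 σ W : Type*} [Field 𝕜] [AddCommGroup W] [Module 𝕜 W]

theorem totalDegree_pderiv_le_pred (p : MvPolynomial σ 𝕜) (i : σ) :
    (pderiv i p).totalDegree ≤ p.totalDegree - 1 := by
  conv_lhs => rw [p.as_sum, map_sum]
  refine totalDegree_finsetSum_le fun s hs => ?_
  rw [pderiv_monomial]
  by_cases hsi : s i = 0
  · simp [hsi]
  refine (totalDegree_monomial_le _ _).trans ?_
  have hs_eq : s - Finsupp.single i 1 + Finsupp.single i 1 = s :=
    tsub_add_cancel_of_le (Finsupp.single_le_iff.mpr (Nat.one_le_iff_ne_zero.mpr hsi))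
  have hsum := congrArg Finsupp.degree hs_eq
  rw [map_add, Finsupp.degree_single] at hsum
  have hle : s.degree ≤ p.totalDegree := le_totalDegree hs
  change (s - Finsupp.single i 1).degree ≤ _
  lia

/-- Composition `S ↦ A ∘ S ∘ B` on both sides, as an operator on polynomial-valued linear maps. -/
def sandwich (A : Module.End 𝕜 (MvPolynomial σ 𝕜)) (B : Module.End 𝕜 W) :
    Module.End 𝕜 (W →ₗ[𝕜] MvPolynomial σ 𝕜) :=
  LinearMap.llcomp 𝕜 _ _ _ A ∘ₗ LinearMap.lcomp 𝕜 _ B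

theorem sandwich_apply (A : Module.End 𝕜 (MvPolynomial σ 𝕜)) (B : Module.End 𝕜 W)
    (S : W →ₗ[𝕜] MvPolynomial σ 𝕜) (φ : W) : sandwich A B S φ = A (S (B φ)) := rfl

theorem sandwich_one_pow (B : Module.End 𝕜 W) (n : ℕ) :
    (sandwich 1 B : Module.End 𝕜 (W →ₗ[𝕜] MvPolynomial σ 𝕜)) ^ n = sandwich 1 (B ^ n) := by
  induction n with
  | zero => rfl
  | succ n ih => rw [pow_succ, ih, pow_succ']; rfl

variable [Fintype σ] (d : σ → Module.End 𝕜 W)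

/-- The operator `∑ⱼ ∂_{uⱼ} ∂_{xⱼ}` of the bosonic Laplacian, with `dⱼ` in the role of `∂_{xⱼ}`. -/
def mixedDiv : Module.End 𝕜 (W →ₗ[𝕜] MvPolynomial σ 𝕜) :=
  ∑ j, sandwich (pderiv j).toLinearMap (d j)

/-- The operator `∑ᵢ uᵢ ∂_{xᵢ}` of the bosonic Laplacian, with `dᵢ` in the role of `∂_{xᵢ}`. -/
def mixedGrad : Module.End 𝕜 (W →ₗ[𝕜] MvPolynomial σ 𝕜) :=
  ∑ i, sandwich (LinearMap.mulLeft 𝕜 (X i)) (d i)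

variable (𝕜 σ W) in
/-- Multiplication of values by `|u|² = ∑ᵢ uᵢ²`. -/
def mulNormSq : Module.End 𝕜 (W →ₗ[𝕜] MvPolynomial σ 𝕜) :=
  sandwich (LinearMap.mulLeft 𝕜 (∑ i, X i ^ 2)) 1

variable {d}

theorem mixedDiv_apply (S : W →ₗ[𝕜] MvPolynomial σ 𝕜) (φ : W) :
    mixedDiv d S φ = ∑ j, pderiv j (S (d j φ)) := by
  simp [mixedDiv, LinearMap.sum_apply, sandwich_apply]

theorem mixedGrad_apply (S : W →ₗ[𝕜] MvPolynomial σ 𝕜) (φ : W) :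
    mixedGrad d S φ = ∑ i, X i * S (d i φ) := by
  simp [mixedGrad, LinearMap.sum_apply, sandwich_apply]

theorem mulNormSq_apply (S : W →ₗ[𝕜] MvPolynomial σ 𝕜) (φ : W) :
    mulNormSq 𝕜 σ W S φ = (∑ i, X i ^ 2) * S φ := rfl

theorem mixedDiv_mul_mixedGrad (hd : ∀ i j, Commute (d i) (d j)) :
    mixedDiv (σ := σ) d * mixedGrad d = sandwich 1 (∑ i, d i ^ 2) + mixedGrad d * mixedDiv d := by
  classical
  ext1 S
  ext1 φ
  have hcomm i j : d i (d j φ) = d j (d i φ) := LinearMap.congr_fun (hd i j).eq φ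
  simp only [Module.End.mul_apply, LinearMap.add_apply, mixedDiv_apply, mixedGrad_apply,
    sandwich_apply, Module.End.one_apply, LinearMap.sum_apply, pow_two, map_sum, Derivation.leibniz,
    pderiv_X, smul_eq_mul, Finset.sum_add_distrib, Finset.mul_sum]
  rw [add_comm]
  refine congrArg₂ (· + ·) (by simp [Pi.single_apply]) ?_
  rw [Finset.sum_comm]
  simp only [hcomm]

theorem mixedDiv_mul_mulNormSq :
    mixedDiv d * mulNormSq 𝕜 σ W = (2 : 𝕜) • mixedGrad d + mulNormSq 𝕜 σ W * mixedDiv d := by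
  classical
  have hnorm (j : σ) : pderiv j (∑ i, (X i : MvPolynomial σ 𝕜) ^ 2) = 2 * X j := by
    simp [map_sum, Derivation.leibniz_pow, Pi.single_apply, two_mul]
  ext1 S
  ext1 φ
  simp only [Module.End.mul_apply, LinearMap.add_apply, LinearMap.smul_apply, mixedDiv_apply,
    mixedGrad_apply, mulNormSq_apply, Derivation.leibniz, hnorm, smul_eq_mul, Finset.mul_sum,
    Finset.smul_sum, ← Finset.sum_add_distrib, smul_eq_C_mul, map_ofNat]
  exact Finset.sum_congr rfl fun j _ => by ring

theorem commute_sandwich_one {A : σ → Module.End 𝕜 (MvPolynomial σ 𝕜)} {B : Module.End 𝕜 W}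
    (hB : ∀ i, Commute (d i) B) : Commute (∑ i, sandwich (A i) (d i)) (sandwich 1 B) := by
  refine Commute.sum_left _ _ _ fun i _ => ?_
  ext1 S
  ext1 φ
  exact congrArg (A i <| S ·) (LinearMap.congr_fun (hB i).eq φ).symm

theorem mixedDiv_pow_eq_zero {k : ℕ} {T : W →ₗ[𝕜] MvPolynomial σ 𝕜}
    (hdeg : ∀ φ, (T φ).totalDegree ≤ k) : (mixedDiv d ^ (k + 1)) T = 0 := by
  have hdrop : ∀ n ≤ k, ∀ φ, ((mixedDiv d ^ n) T φ).totalDegree ≤ k - n := by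
    intro n hn
    induction n with
    | zero => simpa using hdeg
    | succ n ih =>
      intro φ
      rw [pow_succ', Module.End.mul_apply, mixedDiv_apply]
      refine totalDegree_finsetSum_le fun j _ => (totalDegree_pderiv_le_pred _ _).trans ?_
      have := ih (by lia) (d j φ)
      lia
  ext1 φ
  rw [pow_succ', Module.End.mul_apply, mixedDiv_apply]
  refine Finset.sum_eq_zero fun j _ => ?_
  have hconst := hdrop k le_rfl (d j φ)
  rw [Nat.sub_self, Nat.le_zero, totalDegree_eq_zero_iff_eq_C] at hconst
  rw [hconst, pderiv_C]

/-- The bosonic Laplacian as a function of the Hessian in `x` of a polynomial-valued function: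
`B i j` stands for `∂_{xᵢ} ∂_{xⱼ} f`. Denominators are cleared by the factor `a (a - 2)`, and
`a = m + 2k - 2` for `𝒟_k` on `ℝ^m`. -/
def bosonicSymbol (a : 𝕜) : (σ → σ → MvPolynomial σ 𝕜) →ₗ[𝕜] MvPolynomial σ 𝕜 where
  toFun B := (a * (a - 2)) • ∑ i, B i i
    - (4 * (a - 2)) • ∑ i, ∑ j, X i * pderiv j (B i j)
    + (4 : 𝕜) • ((∑ i, X i ^ 2) * ∑ i, ∑ j, pderiv i (pderiv j (B i j)))
  map_add' B C := by
    simp only [Pi.add_apply, map_add, mul_add, Finset.sum_add_distrib]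
    module
  map_smul' c B := by
    simp only [Pi.smul_apply, Derivation.map_smul, mul_smul_comm, ← Finset.smul_sum,
      RingHom.id_apply]
    module

theorem bosonicSymbol_apply (a : 𝕜) (B : σ → σ → MvPolynomial σ 𝕜) :
    bosonicSymbol a B = (a * (a - 2)) • ∑ i, B i i
      - (4 * (a - 2)) • ∑ i, ∑ j, X i * pderiv j (B i j)
      + (4 : 𝕜) • ((∑ i, X i ^ 2) * ∑ i, ∑ j, pderiv i (pderiv j (B i j))) := rfl

theorem laplacian_pow_eq_zero_of_bosonic (hd : ∀ i j, Commute (d i) (d j)) {a : 𝕜} {k : ℕ}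
    (ha : ∀ n ≤ k, (a - 2 * n) * (a - 2 - 2 * n) ≠ 0) {T : W →ₗ[𝕜] MvPolynomial σ 𝕜}
    (hdeg : ∀ φ, (T φ).totalDegree ≤ k)
    (hT : ∀ φ, bosonicSymbol a (fun i j => T (d j (d i φ))) = 0) (φ : W) :
    T (((∑ i, d i ^ 2) ^ (k + 1)) φ) = 0 := by
  have hdΔ i : Commute (d i) (∑ j, d j ^ 2) :=
    Commute.sum_right _ _ _ fun j _ => (hd i j).pow_right 2
  have hLT : ((sandwich 1 (∑ i, d i ^ 2)) ^ (k + 1)) T = 0 := by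
    refine ladder_vanishing (mixedDiv_mul_mixedGrad hd) mixedDiv_mul_mulNormSq
      (commute_sandwich_one hdΔ) (commute_sandwich_one hdΔ) rfl ha ?_ (mixedDiv_pow_eq_zero hdeg)
    ext1 φ
    simpa only [LinearMap.add_apply, LinearMap.sub_apply, LinearMap.smul_apply,
      LinearMap.zero_apply, sandwich_apply, Module.End.one_apply, LinearMap.sum_apply, pow_two,
      Module.End.mul_apply, mixedGrad_apply, mixedDiv_apply, mulNormSq_apply, map_sum,
      Finset.mul_sum, bosonicSymbol_apply] using hT φ
  rw [sandwich_one_pow] at hLT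
  exact LinearMap.congr_fun hLT φ

end Bosonic

theorem integrableOn_ball_of_continuous {E F : Type*} [MetricSpace E] [ProperSpace E]
    [MeasurableSpace E] [OpensMeasurableSpace E] [NormedAddCommGroup F] {μ : Measure E}
    [IsFiniteMeasureOnCompacts μ] {f : E → F} (hf : Continuous f) (x : E) (R : ℝ) :
    IntegrableOn f (ball x R) μ :=
  (hf.continuousOn.integrableOn_compact (isCompact_closedBall x R)).mono_set
    ball_subset_closedBall

section PolynomialFunctions

open MvPolynomial

theorem eval_smul_homogeneousComponent {R σ : Type*} [CommSemiring R] (P : MvPolynomial σ R)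
    (n : ℕ) (c : R) (x : σ → R) :
    eval (c • x) (homogeneousComponent n P) = c ^ n * eval x (homogeneousComponent n P) := by
  rw [eval_eq, eval_eq, Finset.mul_sum]
  refine Finset.sum_congr rfl fun d hd => ?_
  have hdeg : ∑ i ∈ d.support, d i = n := by
    by_contra hne
    exact mem_support_iff.mp hd (by rw [coeff_homogeneousComponent]; exact if_neg hne)
  simp only [Pi.smul_apply, smul_eq_mul, mul_pow, Finset.prod_mul_distrib,
    Finset.prod_pow_eq_pow_sum, hdeg]
  ring

theorem eval_homogeneousComponent_of_eval_smul {R σ : Type*} [CommRing R] [IsDomain R] [Infinite R]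
    {P : MvPolynomial σ R} {k : ℕ} {x : σ → R} (hP : ∀ c : R, eval (c • x) P = c ^ k * eval x P) :
    eval x (homogeneousComponent k P) = eval x P := by
  have hray : ∑ n ∈ Finset.range (P.totalDegree + 1),
      Polynomial.monomial n (eval x (homogeneousComponent n P)) =
      Polynomial.monomial k (eval x P) := by
    refine Polynomial.funext fun c => ?_
    rw [Polynomial.eval_finsetSum, Polynomial.eval_monomial, mul_comm, ← hP]
    conv_rhs => rw [← sum_homogeneousComponent P, map_sum]
    simp only [eval_smul_homogeneousComponent, Polynomial.eval_monomial, mul_comm]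
  have hcoeff := congrArg (Polynomial.coeff · k) hray
  simp only [Polynomial.finsetSum_coeff, Polynomial.coeff_monomial, Finset.sum_ite_eq',
    Finset.mem_range, if_true] at hcoeff
  rw [← hcoeff]
  split_ifs with hk
  · rfl
  · rw [homogeneousComponent_eq_zero _ _ (by lia), map_zero]

theorem IsHk.exists_totalDegree_le {m k : ℕ} {q : Evec m → ℝ} (hq : IsHk m k q) :
    ∃ P : MvPolynomial (Fin m) ℝ, P.totalDegree ≤ k ∧ ∀ u : Evec m, q u = eval ⇑u P := by
  obtain ⟨⟨P, hP⟩, hhom, -⟩ := hq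
  refine ⟨homogeneousComponent k P, (homogeneousComponent_isHomogeneous k P).totalDegree_le,
    fun u => ?_⟩
  rw [hP, eval_homogeneousComponent_of_eval_smul fun c => ?_]
  have := hhom c u
  rwa [hP, hP] at this

variable {σ : Type*}

/-- Evaluation at `u` of the polynomials parametrized by `p`, as a linear functional on the
parameter space. -/
def evalDual {V : Type*} [AddCommGroup V] [Module ℝ V] (p : V →ₗ[ℝ] MvPolynomial σ ℝ)
    (u : EuclideanSpace ℝ σ) : Module.Dual ℝ V :=
  (aeval ⇑u : MvPolynomial σ ℝ →ₐ[ℝ] ℝ).toLinearMap ∘ₗ p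

theorem evalDual_apply {V : Type*} [AddCommGroup V] [Module ℝ V] (p : V →ₗ[ℝ] MvPolynomial σ ℝ)
    (u : EuclideanSpace ℝ σ) (w : V) : evalDual p u w = eval ⇑u (p w) := by
  simp [evalDual, aeval_eq_eval]

variable [Fintype σ]

theorem eq_zero_of_eval_ball_eq_zero {P : MvPolynomial σ ℝ}
    (h : ∀ u ∈ ball (0 : EuclideanSpace ℝ σ) 1, eval ⇑u P = 0) : P = 0 := by
  have hcont : Continuous (WithLp.toLp 2 : (σ → ℝ) → EuclideanSpace ℝ σ) :=
    PiLp.continuous_toLp 2 _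
  obtain ⟨ε, hε, hsub⟩ := Metric.isOpen_iff.mp
    (isOpen_ball.preimage hcont (t := ball (0 : EuclideanSpace ℝ σ) 1)) 0 (by simp)
  refine funext_set (fun _ => Set.Ioo (-ε) ε) (fun _ => Set.Ioo_infinite (by linarith))
    fun x hx => ?_
  rw [map_zero]
  refine h (WithLp.toLp 2 x) (hsub ?_)
  rw [mem_ball, dist_zero_right, pi_norm_lt_iff hε]
  exact fun i => abs_lt.mpr (hx i trivial)

theorem contDiff_eval (P : MvPolynomial σ ℝ) :
    ContDiff ℝ ∞ fun u : EuclideanSpace ℝ σ => eval ⇑u P := by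
  simp only [eval_eq]
  fun_prop

theorem fderiv_eval_single {ι : Type*} [Finite ι] [DecidableEq ι] (P : MvPolynomial ι ℝ)
    (u : EuclideanSpace ℝ ι) (j : ι) :
    fderiv ℝ (fun u : EuclideanSpace ℝ ι => eval ⇑u P) u (EuclideanSpace.single j 1) =
      eval ⇑u (pderiv j P) := by
  have := Fintype.ofFinite ι
  have hdiff (P : MvPolynomial ι ℝ) :
      DifferentiableAt ℝ (fun u : EuclideanSpace ℝ ι => eval ⇑u P) u :=
    (contDiff_eval P).differentiable (by simp) u
  have hcoord (i : ι) : HasFDerivAt (fun u : EuclideanSpace ℝ ι => u i)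
      (EuclideanSpace.proj i : EuclideanSpace ℝ ι →L[ℝ] ℝ) u :=
    (EuclideanSpace.proj i : EuclideanSpace ℝ ι →L[ℝ] ℝ).hasFDerivAt
  induction P using MvPolynomial.induction_on with
  | C a => simp
  | add p q hp hq =>
    simp only [map_add]
    rw [fderiv_fun_add (hdiff p) (hdiff q), add_apply, hp, hq]
  | mul_X p i hp =>
    simp only [map_mul, eval_X]
    rw [((hdiff p).hasFDerivAt.fun_mul (hcoord i)).fderiv]
    by_cases hij : i = j
    · subst hij
      simp [hp]
    · simp [hp, hij]

theorem span_evalDual_ball_eq_top {V : Type*} [AddCommGroup V] [Module ℝ V]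
    [FiniteDimensional ℝ V] {p : V →ₗ[ℝ] MvPolynomial σ ℝ} (hp : Function.Injective p) :
    Submodule.span ℝ (evalDual p '' ball 0 1) = ⊤ := by
  have hker : (Submodule.span ℝ (evalDual p '' ball 0 1)).dualCoannihilator = ⊥ := by
    rw [eq_bot_iff]
    intro w hw
    rw [Submodule.mem_dualCoannihilator] at hw
    refine hp ((eq_zero_of_eval_ball_eq_zero fun u hu => ?_).trans (map_zero p).symm)
    rw [← evalDual_apply]
    exact hw _ (Submodule.subset_span ⟨u, hu, rfl⟩)
  rw [← Subspace.dualCoannihilator_dualAnnihilator_eq (W := Submodule.span ℝ _), hker,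
    Submodule.dualAnnihilator_bot]

theorem integrable_eval_restrict_ball (P : MvPolynomial σ ℝ) :
    Integrable (fun u : EuclideanSpace ℝ σ => eval ⇑u P) (volume.restrict (ball 0 1)) :=
  integrableOn_ball_of_continuous (contDiff_eval P).continuous 0 1

variable (σ) in
/-- A polynomial as an element of `L¹` of the unit ball. -/
def polyL1 : MvPolynomial σ ℝ →ₗ[ℝ]
    (EuclideanSpace ℝ σ →₁[volume.restrict (ball (0 : EuclideanSpace ℝ σ) 1)] ℝ) where
  toFun P := (integrable_eval_restrict_ball P).toL1 _
  map_add' P Q := by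
    rw [← Integrable.toL1_add]
    congr 1
    ext u
    simp
  map_smul' c P := by
    rw [RingHom.id_apply, ← Integrable.toL1_smul]
    congr 1
    ext u
    simp [smul_eval]

theorem norm_polyL1 (P : MvPolynomial σ ℝ) :
    ‖polyL1 σ P‖ = ∫ u in ball (0 : EuclideanSpace ℝ σ) 1, |eval ⇑u P| :=
  L1.norm_of_fun_eq_integral_norm (integrable_eval_restrict_ball P)

theorem polyL1_injective : Function.Injective (polyL1 σ) := by
  rw [← LinearMap.ker_eq_bot, LinearMap.ker_eq_bot']
  intro P hP
  have hae : (fun u : EuclideanSpace ℝ σ => eval ⇑u P) =ᵐ[volume.restrict (ball 0 1)] 0 :=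
    (Integrable.toL1_eq_toL1_iff _ _ (integrable_eval_restrict_ball P) (integrable_zero _ _ _)).mp
      (hP.trans (Integrable.toL1_zero _).symm)
  refine eq_zero_of_eval_ball_eq_zero fun u hu => ?_
  exact Measure.eqOn_open_of_ae_eq hae isOpen_ball (contDiff_eval P).continuous.continuousOn
    continuousOn_const hu

variable (σ) in
/-- Polynomials of degree at most `k` with the norm of `L¹` of the unit ball, the inner norm in the
growth hypothesis. -/
abbrev polyL1LE (k : ℕ) :
    Submodule ℝ (EuclideanSpace ℝ σ →₁[volume.restrict (ball (0 : EuclideanSpace ℝ σ) 1)] ℝ) :=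
  (restrictTotalDegree σ ℝ k).map (polyL1 σ)

variable (σ) in
/-- The polynomial represented by an element of `polyL1LE σ k`. -/
def polyOfL1 (k : ℕ) : polyL1LE σ k →ₗ[ℝ] MvPolynomial σ ℝ :=
  (restrictTotalDegree σ ℝ k).subtype ∘ₗ
    (Submodule.equivMapOfInjective (polyL1 σ) polyL1_injective _).symm.toLinearMap

theorem polyOfL1_injective (k : ℕ) : Function.Injective (polyOfL1 σ k) :=
  Subtype.val_injective.comp (LinearEquiv.injective _)

theorem range_polyOfL1 (k : ℕ) : LinearMap.range (polyOfL1 σ k) = restrictTotalDegree σ ℝ k := by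
  rw [polyOfL1, LinearEquiv.range_comp, Submodule.range_subtype]

theorem norm_polyL1LE {k : ℕ} (w : polyL1LE σ k) :
    ‖w‖ = ∫ u in ball (0 : EuclideanSpace ℝ σ) 1, |eval ⇑u (polyOfL1 σ k w)| := by
  obtain ⟨P, rfl⟩ := (Submodule.equivMapOfInjective (polyL1 σ) polyL1_injective
    (restrictTotalDegree σ ℝ k)).surjective w
  rw [polyOfL1, LinearMap.comp_apply, LinearEquiv.coe_coe, LinearEquiv.symm_apply_apply]
  exact norm_polyL1 P.1

end PolynomialFunctions

open ContinuousLinearMap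
open scoped Convolution

section DirectionalDerivatives

variable {E V : Type*} [NormedAddCommGroup E] [NormedSpace ℝ E] [NormedAddCommGroup V]
  [NormedSpace ℝ V]

/-- The iterated directional derivative `∂_{v₁} ⋯ ∂_{vₙ} f` along a list of directions. -/
def iteratedDirDeriv (L : List E) (f : E → V) : E → V :=
  L.foldr (fun v g x => fderiv ℝ g x v) f

@[simp]
theorem iteratedDirDeriv_nil (f : E → V) : iteratedDirDeriv [] f = f := rfl

@[simp]
theorem iteratedDirDeriv_cons (v : E) (L : List E) (f : E → V) :
    iteratedDirDeriv (v :: L) f = fun x => fderiv ℝ (iteratedDirDeriv L f) x v := rfl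

theorem contDiff_fderiv_apply_const {n : ℕ} {f : E → V} (hf : ContDiff ℝ (n + 1) f) (v : E) :
    ContDiff ℝ n fun x => fderiv ℝ f x v :=
  (hf.fderiv_right le_rfl).clm_apply contDiff_const

theorem contDiff_iteratedDirDeriv {f : E → V} (hf : ContDiff ℝ ∞ f) (L : List E) :
    ContDiff ℝ ∞ (iteratedDirDeriv L f) := by
  induction L with
  | nil => exact hf
  | cons v L ih => exact (ih.fderiv_right le_rfl).clm_apply contDiff_const

theorem continuous_iteratedDirDeriv_pair {F : E → V} (hF : ContDiff ℝ 2 F) (v w : E) :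
    Continuous (iteratedDirDeriv [v, w] F) :=
  (contDiff_fderiv_apply_const (n := 0) (by
    simpa using contDiff_fderiv_apply_const (n := 1) (by norm_num; exact hF) w) v).continuous

theorem hasCompactSupport_iteratedDirDeriv {f : E → V} (hf : HasCompactSupport f) (L : List E) :
    HasCompactSupport (iteratedDirDeriv L f) := by
  induction L with
  | nil => exact hf
  | cons v L ih => exact ih.fderiv_apply ℝ v

theorem iteratedDirDeriv_comp_smul (f : E → V) (c : ℝ) (L : List E) :
    iteratedDirDeriv L (fun x => f (c • x)) =
      fun x => c ^ L.length • iteratedDirDeriv L f (c • x) := by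
  induction L with
  | nil => simp
  | cons v L ih =>
    ext x
    simp only [iteratedDirDeriv_cons, ih, List.length_cons]
    have hsmul : (fun y => c ^ L.length • iteratedDirDeriv L f (c • y)) =
        c ^ L.length • fun y => iteratedDirDeriv L f (c • y) := rfl
    rw [hsmul, fderiv_const_smul_field, Pi.smul_apply, fderiv_comp_smul (f := iteratedDirDeriv L f),
      smul_apply, smul_apply, smul_smul, pow_succ]

theorem iteratedDirDeriv_clm_apply {V' : Type*} [NormedAddCommGroup V'] [NormedSpace ℝ V']
    (g : V →L[ℝ] V') {f : E → V} (hf : ContDiff ℝ ∞ f) (L : List E) :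
    iteratedDirDeriv L (fun x => g (f x)) = fun x => g (iteratedDirDeriv L f x) := by
  induction L with
  | nil => rfl
  | cons v L ih =>
    ext x
    have hL : DifferentiableAt ℝ (iteratedDirDeriv L f) x :=
      (contDiff_iteratedDirDeriv hf L).differentiable (by simp) x
    rw [iteratedDirDeriv_cons, ih]
    exact congrArg (· v) (g.hasFDerivAt.comp x hL.hasFDerivAt).fderiv

theorem fderiv_comp_sub_smul {f : E → V} (hf : Differentiable ℝ f) (x : E) (c : ℝ) (z : E) :
    fderiv ℝ (fun z => f (x - c • z)) z = -c • fderiv ℝ f (x - c • z) := by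
  have hinner : HasFDerivAt (fun z : E => x - c • z) (-(c • ContinuousLinearMap.id ℝ E)) z :=
    ((hasFDerivAt_id z).const_smul c).const_sub x
  refine ((hf (x - c • z)).hasFDerivAt.comp z hinner).fderiv.trans ?_
  ext v
  simp

variable [MeasurableSpace E] [BorelSpace E] [FiniteDimensional ℝ E] {μ : Measure E}
  [μ.IsAddHaarMeasure]

theorem iteratedDirDeriv_convolution {φ : E → ℝ} (hφ : ContDiff ℝ ∞ φ)
    (hφc : HasCompactSupport φ) {F : E → V} (hF : LocallyIntegrable F μ) (L : List E) :
    iteratedDirDeriv L (φ ⋆[lsmul ℝ ℝ, μ] F) = (iteratedDirDeriv L φ) ⋆[lsmul ℝ ℝ, μ] F := by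
  induction L with
  | nil => rfl
  | cons v L ih =>
    have hψ := contDiff_iteratedDirDeriv hφ L
    have hψc := hasCompactSupport_iteratedDirDeriv hφc L
    ext x
    simp only [iteratedDirDeriv_cons]
    rw [ih, (hψc.hasFDerivAt_convolution_left (lsmul ℝ ℝ)
      (hψ.of_le (by simp)) hF x).fderiv, convolution_def, convolution_def,
      ContinuousLinearMap.integral_apply]
    · rfl
    · exact (hψc.fderiv ℝ).convolutionExists_left _ (hψ.continuous_fderiv (by simp)) hF x

theorem integral_fderiv_apply_smul {φ : E → ℝ} (hφ : ContDiff ℝ 1 φ) (hφc : HasCompactSupport φ)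
    {h : E → V} (hh : ContDiff ℝ 1 h) (v : E) :
    ∫ z, fderiv ℝ φ z v • h z ∂μ = -∫ z, φ z • fderiv ℝ h z v ∂μ := by
  have hφ' : Continuous fun z => fderiv ℝ φ z v :=
    (hφ.continuous_fderiv one_ne_zero).clm_apply continuous_const
  have hh' : Continuous fun z => fderiv ℝ h z v :=
    (hh.continuous_fderiv one_ne_zero).clm_apply continuous_const
  rw [eq_neg_iff_add_eq_zero, ← eq_neg_iff_add_eq_zero.mp
    (integral_bilinear_hasFDerivAt_right_eq_neg_left_of_integrable (B := lsmul ℝ ℝ) (μ := μ)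
    ((hφ'.smul hh.continuous).integrable_of_hasCompactSupport (hφc.fderiv_apply ℝ v).smul_right)
    ((hφ.continuous.smul hh').integrable_of_hasCompactSupport hφc.smul_right)
    ((hφ.continuous.smul hh.continuous).integrable_of_hasCompactSupport hφc.smul_right)
    (fun x _ => (hφ.differentiable one_ne_zero x).hasFDerivAt)
    (fun x _ => (hh.differentiable one_ne_zero x).hasFDerivAt)), add_comm]
  rfl

theorem convolution_fderiv_apply {φ : E → ℝ} (hφ : ContDiff ℝ 1 φ) (hφc : HasCompactSupport φ)
    {h : E → V} (hh : ContDiff ℝ 1 h) (v : E) :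
    (fun z => fderiv ℝ φ z v) ⋆[lsmul ℝ ℝ, μ] h = φ ⋆[lsmul ℝ ℝ, μ] fun z => fderiv ℝ h z v := by
  ext x
  simp only [convolution_def, lsmul_apply]
  rw [integral_fderiv_apply_smul (h := fun z => h (x - z)) hφ hφc (by fun_prop), ← integral_neg]
  congr 1
  ext z
  have hcomp := fderiv_comp_sub_smul (hh.differentiable one_ne_zero) x 1 z
  simp only [one_smul] at hcomp
  rw [hcomp, smul_apply, neg_one_smul, smul_neg, neg_neg]

end DirectionalDerivatives

section TestFunctions

open TopologicalSpace
open scoped LineDeriv Distributions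

variable {E V : Type*} [NormedAddCommGroup E] [NormedSpace ℝ E] [NormedAddCommGroup V]
  [NormedSpace ℝ V] {Ω : Opens E}

theorem coe_lineDerivOp_testFunction (v : E) (φ : 𝓓(Ω, V)) :
    ⇑(∂_{v} φ : 𝓓(Ω, V)) = fun x => fderiv ℝ φ x v := by
  ext x
  rw [TestFunction.lineDerivOp_eq_lineDerivCLM ℝ, TestFunction.lineDerivCLM_apply_of_le (by simp)]
  exact (φ.contDiff.differentiable (by simp) x).lineDeriv_eq_fderiv

theorem lineDerivOp_testFunction_comm (v w : E) (φ : 𝓓(Ω, V)) :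
    ∂_{v} (∂_{w} φ) = ∂_{w} (∂_{v} φ) := by
  ext x
  have hφ' : DifferentiableAt ℝ (fderiv ℝ φ) x :=
    (φ.contDiff.fderiv_right (m := ∞) le_rfl).differentiable (by simp) x
  simp only [coe_lineDerivOp_testFunction]
  rw [fderiv_clm_apply hφ' (differentiableAt_const _),
    fderiv_clm_apply hφ' (differentiableAt_const _)]
  simpa using (φ.contDiff.contDiffAt.isSymmSndFDerivAt (by simpa using ENat.LEInfty.out)) v w

end TestFunctions

section WeaklyPolyharmonic

open TopologicalSpace
open scoped Laplacian LineDeriv Distributions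

variable {E V : Type*} [NormedAddCommGroup E] [InnerProductSpace ℝ E] [FiniteDimensional ℝ E]
  [NormedAddCommGroup V] [NormedSpace ℝ V]

theorem laplacian_eq_sum_iteratedDirDeriv {ι : Type*} [Fintype ι] (b : OrthonormalBasis ι ℝ E)
    {f : E → V} (hf : ContDiff ℝ 2 f) : Δ f = fun x => ∑ i, iteratedDirDeriv [b i, b i] f x := by
  rw [InnerProductSpace.laplacian_eq_iteratedFDeriv_orthonormalBasis f b]
  ext x
  have hf' : DifferentiableAt ℝ (fderiv ℝ f) x :=
    (hf.fderiv_right (m := 1) (by norm_num)).differentiable one_ne_zero x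
  simp only [iteratedFDeriv_two_apply, iteratedDirDeriv_cons,
    iteratedDirDeriv_nil, Matrix.cons_val_zero, Matrix.cons_val_one]
  refine Finset.sum_congr rfl fun i _ => ?_
  rw [fderiv_clm_apply hf' (differentiableAt_const _)]
  simp

theorem contDiff_laplacian {f : E → V} (hf : ContDiff ℝ ∞ f) : ContDiff ℝ ∞ (Δ f) := by
  rw [laplacian_eq_sum_iteratedDirDeriv (stdOrthonormalBasis ℝ E) (hf.of_le ENat.LEInfty.out)]
  exact .sum fun i _ => contDiff_iteratedDirDeriv hf _

theorem coe_laplacianCLM_testFunction (φ : 𝓓((⊤ : Opens E), V)) :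
    ⇑(LineDeriv.laplacianCLM ℝ E 𝓓((⊤ : Opens E), V) φ) = Δ ⇑φ := by
  rw [LineDeriv.laplacianCLM_eq_sum (stdOrthonormalBasis ℝ E),
    laplacian_eq_sum_iteratedDirDeriv (stdOrthonormalBasis ℝ E)
      (φ.contDiff.of_le ENat.LEInfty.out)]
  ext x
  simp [coe_lineDerivOp_testFunction]

variable [MeasurableSpace E] [BorelSpace E]

variable (N : ℕ) (F : E → V) in
/-- `Δ ^ N F = 0` in the sense of distributions. -/
def WeaklyPolyharmonic : Prop :=
  ∀ φ : 𝓓((⊤ : Opens E), ℝ),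
    ⇑((LineDeriv.laplacianCLM ℝ E 𝓓((⊤ : Opens E), ℝ))^[N] φ) ⋆[lsmul ℝ ℝ] F = 0

theorem laplacian_convolution (φ : 𝓓((⊤ : Opens E), ℝ)) {F : E → V} (hF : LocallyIntegrable F) :
    Δ (φ ⋆[lsmul ℝ ℝ] F) =
      ⇑(LineDeriv.laplacianCLM ℝ E 𝓓((⊤ : Opens E), ℝ) φ) ⋆[lsmul ℝ ℝ] F := by
  have hφ := φ.contDiff
  have hφc := φ.hasCompactSupport
  let b := stdOrthonormalBasis ℝ E
  rw [laplacian_eq_sum_iteratedDirDeriv b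
      ((hφc.contDiff_convolution_left _ hφ hF).of_le ENat.LEInfty.out),
    coe_laplacianCLM_testFunction,
    laplacian_eq_sum_iteratedDirDeriv b (hφ.of_le ENat.LEInfty.out)]
  ext x
  simp only [convolution_def, map_sum, sum_apply, iteratedDirDeriv_convolution hφ hφc hF]
  rw [integral_finsetSum]
  exact fun i _ => (hasCompactSupport_iteratedDirDeriv hφc _).convolutionExists_left _
    (contDiff_iteratedDirDeriv hφ _).continuous hF x

theorem WeaklyPolyharmonic.iterate_laplacian_convolution {N : ℕ} {F : E → V}
    (hF : WeaklyPolyharmonic N F) (hFi : LocallyIntegrable F) (φ : 𝓓((⊤ : Opens E), ℝ)) :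
    Δ^[N] (φ ⋆[lsmul ℝ ℝ] F) = 0 := by
  have hiter (n : ℕ) : Δ^[n] (φ ⋆[lsmul ℝ ℝ] F) =
      ⇑((LineDeriv.laplacianCLM ℝ E 𝓓((⊤ : Opens E), ℝ))^[n] φ) ⋆[lsmul ℝ ℝ] F := by
    induction n with
    | zero => rfl
    | succ n ih => rw [Function.iterate_succ_apply', ih, laplacian_convolution _ hFi,
        Function.iterate_succ_apply']
  rw [hiter, hF φ]

end WeaklyPolyharmonic

theorem hasDerivAt_integral_smul_of_hasCompactSupport {X V : Type*} [TopologicalSpace X]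
    [MeasurableSpace X] [OpensMeasurableSpace X] {μ : Measure X} [IsFiniteMeasureOnCompacts μ]
    [NormedAddCommGroup V] [NormedSpace ℝ V] {K : X → ℝ} (hK : Continuous K)
    (hKc : HasCompactSupport K) {f f' : ℝ → X → V} (hf : ∀ R, Continuous (f R))
    (hf' : Continuous f'.uncurry) (hderiv : ∀ R z, HasDerivAt (f · z) (f' R z) R) (R : ℝ) :
    HasDerivAt (fun R => ∫ z, K z • f R z ∂μ) (∫ z, K z • f' R z ∂μ) R := by
  obtain ⟨C, hC⟩ := ((isCompact_closedBall R 1).prod hKc).exists_bound_of_continuousOn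
    hf'.continuousOn
  have hint {h : X → V} (hh : Continuous h) : Integrable (fun z => K z • h z) μ :=
    (hK.smul hh).integrable_of_hasCompactSupport hKc.smul_right
  have hbound : Integrable (fun z => ‖K z‖ * C) μ :=
    (hK.norm.integrable_of_hasCompactSupport hKc.norm).mul_const C
  refine (hasDerivAt_integral_of_dominated_loc_of_deriv_le (ball_mem_nhds R one_pos)
    (.of_forall fun S => (hint (hf S)).aestronglyMeasurable) (hint (hf R))
    (hint (hf'.uncurry_left R)).aestronglyMeasurable (.of_forall fun z S hS => ?_) hbound
    (.of_forall fun z S _ => (hderiv S z).const_smul (K z))).2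
  rw [norm_smul]
  by_cases hz : z ∈ tsupport K
  · exact mul_le_mul_of_nonneg_left (hC (S, z) ⟨ball_subset_closedBall hS, hz⟩) (norm_nonneg _)
  · simp [image_eq_zero_of_notMem_tsupport hz]

section Profiles

/-- `g` is a smooth profile: `z ↦ g (‖z‖ ^ 2)` is then a radial test function. -/
def IsProfile (g : ℝ → ℝ) : Prop := ContDiff ℝ ∞ g ∧ ∃ S : ℝ, ∀ s, S ≤ s → g s = 0

theorem IsProfile.exists_antideriv {g : ℝ → ℝ} (hg : IsProfile g) :
    ∃ G, IsProfile G ∧ ∀ s, HasDerivAt G (g s) s := by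
  obtain ⟨hsmooth, S, hS⟩ := hg
  have hderiv (s : ℝ) : HasDerivAt (fun s => ∫ t in S..s, g t) (g s) s :=
    (hsmooth.continuous.integral_hasStrictDerivAt S s).hasDerivAt
  refine ⟨fun s => ∫ t in S..s, g t, ⟨?_, S, fun s hs => ?_⟩, hderiv⟩
  · rw [contDiff_infty_iff_deriv]
    exact ⟨fun s => (hderiv s).differentiableAt, by rwa [funext fun s => (hderiv s).deriv]⟩
  · refine (intervalIntegral.integral_congr fun t ht => ?_).trans intervalIntegral.integral_zero
    rw [Set.uIcc_of_le hs] at ht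
    exact hS t ht.1

theorem IsProfile.const_mul {g : ℝ → ℝ} (hg : IsProfile g) (c : ℝ) :
    IsProfile fun s => c * g s :=
  ⟨contDiff_const.mul hg.1, hg.2.imp fun S hS s hs => by simp [hS s hs]⟩

variable {E : Type*} [NormedAddCommGroup E] [InnerProductSpace ℝ E]

theorem IsProfile.contDiff_radial {g : ℝ → ℝ} (hg : IsProfile g) :
    ContDiff ℝ ∞ fun z : E => g (‖z‖ ^ 2) :=
  hg.1.comp (contDiff_id.norm_sq ℝ)

variable [FiniteDimensional ℝ E]

theorem IsProfile.hasCompactSupport_radial {g : ℝ → ℝ} (hg : IsProfile g) :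
    HasCompactSupport fun z : E => g (‖z‖ ^ 2) := by
  obtain ⟨-, S, hS⟩ := hg
  refine HasCompactSupport.intro (isCompact_closedBall 0 (1 + |S|)) fun z hz => hS _ ?_
  rw [mem_closedBall_zero_iff, not_le] at hz
  nlinarith [le_abs_self S, abs_nonneg S]

variable [MeasurableSpace E] [BorelSpace E]

variable (E) in
theorem exists_isProfile_integral_eq_one : ∃ g, IsProfile g ∧ ∫ z : E, g (‖z‖ ^ 2) = 1 := by
  let g₀ : ℝ → ℝ := fun s => Real.smoothTransition (1 - s)
  have hg₀ : IsProfile g₀ :=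
    ⟨Real.smoothTransition.contDiff.comp (by fun_prop), 1, fun s hs =>
      Real.smoothTransition.zero_of_nonpos (by linarith)⟩
  have hpos : 0 < ∫ z : E, g₀ (‖z‖ ^ 2) :=
    hg₀.contDiff_radial.continuous.integral_pos_of_hasCompactSupport_nonneg_nonzero (x := 0)
      hg₀.hasCompactSupport_radial (fun z => Real.smoothTransition.nonneg _) (by simp [g₀])
  refine ⟨_, hg₀.const_mul (∫ z : E, g₀ (‖z‖ ^ 2))⁻¹, ?_⟩
  rw [integral_const_mul, inv_mul_cancel₀ hpos.ne']

end Profiles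

section RadialMean

open scoped Laplacian

variable {E V : Type*} [NormedAddCommGroup E] [InnerProductSpace ℝ E] [FiniteDimensional ℝ E]
  [MeasurableSpace E] [BorelSpace E] [NormedAddCommGroup V] [NormedSpace ℝ V]

/-- The mean of `F` around `x` at scale `R`, weighted by the radial profile `g`. Negative and zero
scales are allowed. -/
def radialMean (F : E → V) (g : ℝ → ℝ) (x : E) (R : ℝ) : V :=
  ∫ z, g (‖z‖ ^ 2) • F (x - R • z)

theorem integral_radial_mul_inner_smul {g G : ℝ → ℝ} (hG : IsProfile G)
    (hGg : ∀ s, HasDerivAt G (-(1 / 2) * g s) s) {h : E → V} (hh : ContDiff ℝ 1 h) (v : E) :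
    ∫ z, (g (‖z‖ ^ 2) * ⟪v, z⟫) • h z = ∫ z, G (‖z‖ ^ 2) • fderiv ℝ h z v := by
  rw [← neg_inj, ← integral_fderiv_apply_smul (hG.contDiff_radial.of_le ENat.LEInfty.out)
    hG.hasCompactSupport_radial hh, ← integral_neg]
  congr 1
  ext z
  rw [← neg_smul]
  congr 1
  have hradial := (hGg (‖z‖ ^ 2)).comp_hasFDerivAt z (hasStrictFDerivAt_norm_sq z).hasFDerivAt
  rw [show (fun z : E => G (‖z‖ ^ 2)) = G ∘ fun z => ‖z‖ ^ 2 from rfl, hradial.fderiv]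
  simp [real_inner_comm v z]
  ring

theorem integral_radial_smul_fderiv {F : E → V} (hF : ContDiff ℝ 2 F) {g G : ℝ → ℝ}
    (hg : IsProfile g) (hG : IsProfile G) (hGg : ∀ s, HasDerivAt G (-(1 / 2) * g s) s) (x : E)
    (R : ℝ) :
    ∫ z, g (‖z‖ ^ 2) • fderiv ℝ F (x - R • z) z = -R • radialMean (Δ F) G x R := by
  let b := stdOrthonormalBasis ℝ E
  have hF' (v : E) : ContDiff ℝ 1 fun y => fderiv ℝ F y v :=
    contDiff_fderiv_apply_const (n := 1) (one_add_one_eq_two (R := WithTop ℕ∞) ▸ hF) v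
  have hcomp (v : E) : ContDiff ℝ 1 fun z => fderiv ℝ F (x - R • z) v :=
    (hF' v).comp (by fun_prop)
  have hexpand (z : E) : g (‖z‖ ^ 2) • fderiv ℝ F (x - R • z) z =
      ∑ i, (g (‖z‖ ^ 2) * ⟪b i, z⟫) • fderiv ℝ F (x - R • z) (b i) := by
    have := congrArg (fderiv ℝ F (x - R • z)) (b.sum_repr' z).symm
    simp only [map_sum, map_smul] at this
    simp only [this, Finset.smul_sum, smul_smul]
  have hterm (i) : ∫ z, (g (‖z‖ ^ 2) * ⟪b i, z⟫) • fderiv ℝ F (x - R • z) (b i) =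
      -R • ∫ z, G (‖z‖ ^ 2) • iteratedDirDeriv [b i, b i] F (x - R • z) := by
    rw [integral_radial_mul_inner_smul hG hGg (hcomp _), ← integral_smul]
    simp only [fderiv_comp_sub_smul ((hF' (b i)).differentiable one_ne_zero), smul_apply,
      smul_comm (-R), iteratedDirDeriv_cons, iteratedDirDeriv_nil]
  have hint {K : ℝ → ℝ} (hK : IsProfile K) {c : E → V} (hc : Continuous c) :
      Integrable fun z : E => K (‖z‖ ^ 2) • c z :=
    (hK.contDiff_radial.continuous.smul hc).integrable_of_hasCompactSupport
      hK.hasCompactSupport_radial.smul_right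
  have hsecond (i) : Continuous fun z => iteratedDirDeriv [b i, b i] F (x - R • z) := by
    have := ((hF' (b i)).continuous_fderiv_apply one_ne_zero).comp
      (((continuous_const.sub (continuous_const_smul R)) : Continuous fun z => x - R • z).prodMk
        (continuous_const (y := b i)))
    exact this
  simp only [hexpand]
  rw [integral_finsetSum _ fun i _ => ?_]
  · simp only [hterm, radialMean, laplacian_eq_sum_iteratedDirDeriv b hF, Finset.smul_sum]
    rw [integral_finsetSum _ fun i _ => hint hG (hsecond i), Finset.smul_sum]
  · simpa only [smul_smul] using hint hg (c := fun z => ⟪b i, z⟫ • fderiv ℝ F (x - R • z) (b i))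
      (.smul (by fun_prop) (hcomp (b i)).continuous)

theorem hasDerivAt_radialMean {F : E → V} (hF : ContDiff ℝ 2 F) {g G : ℝ → ℝ}
    (hg : IsProfile g) (hG : IsProfile G) (hGg : ∀ s, HasDerivAt G (-(1 / 2) * g s) s) (x : E)
    (R : ℝ) : HasDerivAt (radialMean F g x) (R • radialMean (Δ F) G x R) R := by
  have hderiv (S : ℝ) (z : E) :
      HasDerivAt (fun S => F (x - S • z)) (-fderiv ℝ F (x - S • z) z) S := by
    have hinner : HasDerivAt (fun S : ℝ => x - S • z) (-z) S := by
      simpa using ((hasDerivAt_id S).smul_const z).const_sub x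
    simpa [Function.comp_def] using
      (hF.differentiable two_ne_zero _).hasFDerivAt.comp_hasDerivAt S hinner
  have hcont : Continuous (Function.uncurry fun (S : ℝ) z => -fderiv ℝ F (x - S • z) z) := by
    have := (hF.continuous_fderiv_apply two_ne_zero).comp
      (((by fun_prop : Continuous fun p : ℝ × E => x - p.1 • p.2)).prodMk continuous_snd)
    exact this.neg
  have hintegral : ∫ z, g (‖z‖ ^ 2) • -fderiv ℝ F (x - R • z) z =
      R • radialMean (Δ F) G x R := by
    simp only [smul_neg, integral_neg, integral_radial_smul_fderiv hF hg hG hGg, neg_smul, neg_neg]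
  rw [← hintegral]
  exact hasDerivAt_integral_smul_of_hasCompactSupport hg.contDiff_radial.continuous
    hg.hasCompactSupport_radial (fun S => hF.continuous.comp (by fun_prop)) hcont hderiv R

-- Pizzetti's formula, without identifying the coefficients as multiples of `Δ^j F x`.
theorem exists_radialMean_eq_sum_pow {N : ℕ} {F : E → V} (hF : ContDiff ℝ ∞ F)
    (hN : Δ^[N] F = 0) {g : ℝ → ℝ} (hg : IsProfile g) (x : E) :
    ∃ A : ℕ → V, ∀ R, radialMean F g x R = ∑ j ∈ Finset.range N, (R ^ 2) ^ j • A j := by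
  induction N generalizing F g with
  | zero => exact ⟨0, fun R => by simp [radialMean, show F = 0 from hN]⟩
  | succ N ih =>
    obtain ⟨G, hG, hGg⟩ := (hg.const_mul (-(1 / 2))).exists_antideriv
    obtain ⟨A, hA⟩ := ih (contDiff_laplacian hF) hN hG
    let B : ℕ → V := fun j => (2 * (j + 1) : ℝ)⁻¹ • A j
    have hB (R : ℝ) : HasDerivAt (fun R : ℝ => ∑ j ∈ Finset.range N, (R ^ 2) ^ (j + 1) • B j)
        (R • radialMean (Δ F) G x R) R := by
      rw [hA, Finset.smul_sum]
      refine HasDerivAt.fun_sum fun j _ => ?_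
      convert ((hasDerivAt_pow 2 R).fun_pow (j + 1)).smul_const (B j) using 1
      simp only [B, smul_smul]
      congr 1
      push_cast
      field_simp
    have hd (R : ℝ) := (hasDerivAt_radialMean (hF.of_le ENat.LEInfty.out) hg hG hGg x R).sub (hB R)
    have hconst (R : ℝ) : radialMean F g x R - ∑ j ∈ Finset.range N, (R ^ 2) ^ (j + 1) • B j =
        radialMean F g x 0 := by
      simpa using is_const_of_deriv_eq_zero (fun R => (hd R).differentiableAt)
        (fun R => by simpa using (hd R).deriv) R 0
    refine ⟨fun j => j.casesOn (radialMean F g x 0) B, fun R => ?_⟩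
    rw [Finset.sum_range_succ', ← hconst R]
    simp

end RadialMean

section ReproducingKernel

open TopologicalSpace
open scoped Laplacian Distributions

theorem exists_sum_weight_mul_pow_eq_zero_pow {𝕜 ι : Type*} [Field 𝕜] {s : Finset ι} {v : ι → 𝕜}
    (hv : Set.InjOn v s) : ∃ w : ι → 𝕜, ∀ j < s.card, ∑ i ∈ s, w i * v i ^ j = 0 ^ j := by
  classical
  refine ⟨fun i => (Lagrange.basis s v i).eval 0, fun j hj => ?_⟩
  have hinterp := congrArg (Polynomial.eval 0) (Lagrange.eq_interpolate (f := Polynomial.X ^ j) hv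
    (by simpa using hj))
  simpa [Lagrange.interpolate_apply, Polynomial.eval_finsetSum, mul_comm] using hinterp.symm

variable {E V : Type*} [NormedAddCommGroup E] [InnerProductSpace ℝ E] [FiniteDimensional ℝ E]
  [MeasurableSpace E] [BorelSpace E] [NormedAddCommGroup V] [NormedSpace ℝ V]

theorem radialMean_mul {c : ℝ} (hc : 0 < c) (F : E → V) (g : ℝ → ℝ) (x : E) (R : ℝ) :
    radialMean F g x (c * R) =
      (c ^ Module.finrank ℝ E)⁻¹ • ∫ z, g (‖c⁻¹ • z‖ ^ 2) • F (x - R • z) := by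
  have hscale := Measure.integral_comp_inv_smul_of_nonneg volume
    (fun z : E => g (‖z‖ ^ 2) • F (x - (c * R) • z)) hc.le
  have hcancel (z : E) : (c * R) • c⁻¹ • z = R • z := by
    rw [smul_smul, mul_right_comm, mul_inv_cancel₀ hc.ne', one_mul]
  simp only [hcancel] at hscale
  rw [hscale, inv_smul_smul₀ (pow_ne_zero _ hc.ne'), radialMean]

theorem exists_sum_radialMean_eq [CompleteSpace V] (N : ℕ) {g : ℝ → ℝ} (hg : IsProfile g)
    (hg1 : ∫ z : E, g (‖z‖ ^ 2) = 1) : ∃ w : ℕ → ℝ, ∀ F : E → V, ContDiff ℝ ∞ F → Δ^[N] F = 0 →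
      ∀ x R, ∑ i ∈ Finset.range N, w i • radialMean F g x ((i + 1) * R) = F x := by
  obtain ⟨w, hw⟩ := exists_sum_weight_mul_pow_eq_zero_pow (s := Finset.range N)
    (v := fun i => ((i : ℝ) + 1) ^ 2) fun i _ j _ hij => by
      simpa using (sq_eq_sq₀ (by positivity) (by positivity)).1 hij
  refine ⟨w, fun F hF hN x R => ?_⟩
  obtain ⟨A, hA⟩ := exists_radialMean_eq_sum_pow hF hN hg x
  have hzero : F x = ∑ j ∈ Finset.range N, (0 : ℝ) ^ j • A j := by
    simpa [radialMean, integral_smul_const, hg1] using hA 0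
  simp only [hA, Finset.smul_sum, smul_smul]
  rw [Finset.sum_comm, hzero]
  refine Finset.sum_congr rfl fun j hj => ?_
  rw [← Finset.sum_smul]
  congr 1
  calc ∑ i ∈ Finset.range N, w i * (((i + 1) * R) ^ 2) ^ j
      = (∑ i ∈ Finset.range N, w i * (((i : ℝ) + 1) ^ 2) ^ j) * (R ^ 2) ^ j := by
        rw [Finset.sum_mul]
        exact Finset.sum_congr rfl fun i _ => by rw [mul_pow, mul_pow, mul_assoc]
    _ = 0 ^ j := by
        rw [hw j (by simpa using hj)]
        cases j <;> simp

variable (E V) in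
theorem exists_reproducing_kernel_of_iterate_laplacian_eq_zero [CompleteSpace V] (N : ℕ) :
    ∃ κ : E → ℝ, ContDiff ℝ ∞ κ ∧ HasCompactSupport κ ∧ ∀ F : E → V, ContDiff ℝ ∞ F →
      Δ^[N] F = 0 → ∀ x (R : ℝ), ∫ z, κ z • F (x - R • z) = F x := by
  obtain ⟨g, hg, hg1⟩ := exists_isProfile_integral_eq_one E
  obtain ⟨w, hw⟩ := exists_sum_radialMean_eq (V := V) N hg hg1
  let dilate (i : ℕ) (z : E) : ℝ := g (‖((i : ℝ) + 1)⁻¹ • z‖ ^ 2)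
  have hdilate (i : ℕ) : ContDiff ℝ ∞ (dilate i) := hg.contDiff_radial.comp (contDiff_const_smul _)
  have hdilatec (i : ℕ) : HasCompactSupport (dilate i) :=
    hg.hasCompactSupport_radial.comp_smul (by positivity)
  let c (i : ℕ) : ℝ := w i * (((i : ℝ) + 1) ^ Module.finrank ℝ E)⁻¹
  refine ⟨fun z => ∑ i ∈ Finset.range N, c i * dilate i z,
    .sum fun i _ => contDiff_const.mul (hdilate i), ?_, fun F hF hN x R => ?_⟩
  · rw [← Finset.sum_fn]
    exact Finset.sum_induction _ HasCompactSupport (fun _ _ => .add) .zero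
      fun i _ => (hdilatec i).mul_left
  · have hint (i : ℕ) : Integrable fun z => dilate i z • F (x - R • z) :=
      have htrans : Continuous fun z => F (x - R • z) := hF.continuous.comp (by fun_prop)
      ((hdilate i).continuous.smul htrans).integrable_of_hasCompactSupport (hdilatec i).smul_right
    simp only [← hw F hF hN x R, Finset.sum_smul, mul_smul (c _)]
    rw [integral_finsetSum _ fun i _ => (hint i).fun_smul (c i)]
    refine Finset.sum_congr rfl fun i _ => ?_
    rw [radialMean_mul (by positivity), integral_smul, mul_smul]

theorem continuous_integral_smul_of_hasCompactSupport {X Y : Type*} [TopologicalSpace X]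
    [FirstCountableTopology X] [LocallyCompactSpace X] [TopologicalSpace Y] [MeasurableSpace Y]
    [OpensMeasurableSpace Y] [SecondCountableTopology Y] {μ : Measure Y} [IsLocallyFiniteMeasure μ]
    {K : Y → ℝ} (hK : Continuous K) (hKc : HasCompactSupport K) {f : X → Y → V}
    (hf : Continuous f.uncurry) : Continuous fun x => ∫ y, K y • f x y ∂μ := by
  have hset (x : X) : ∫ y, K y • f x y ∂μ = ∫ y in tsupport K, K y • f x y ∂μ :=
    (setIntegral_eq_integral_of_forall_compl_eq_zero fun y hy => by
      rw [image_eq_zero_of_notMem_tsupport hy, zero_smul]).symm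
  simp only [hset]
  exact continuous_parametric_integral_of_continuous
    ((hK.comp continuous_snd).smul hf) hKc

theorem WeaklyPolyharmonic.integral_smul_eq [CompleteSpace V] {N : ℕ} {κ : E → ℝ}
    (hκ : Continuous κ) (hκc : HasCompactSupport κ) (hκN : ∀ F : E → V, ContDiff ℝ ∞ F →
      Δ^[N] F = 0 → ∀ x (R : ℝ), ∫ z, κ z • F (x - R • z) = F x)
    {F : E → V} (hF : WeaklyPolyharmonic N F) (hFc : Continuous F) (x : E) (R : ℝ) :
    ∫ z, κ z • F (x - R • z) = F x := by
  have hcont : Continuous fun x => ∫ z, κ z • F (x - R • z) :=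
    continuous_integral_smul_of_hasCompactSupport hκ hκc
      (hFc.comp (by fun_prop : Continuous fun p : E × E => p.1 - R • p.2))
  refine congrFun (Continuous.ae_eq_iff_eq volume hcont hFc |>.1 ?_) x
  refine ae_eq_of_integral_contDiff_smul_eq hcont.locallyIntegrable hFc.locallyIntegrable
    fun g hg hgc => ?_
  let φ : 𝓓((⊤ : Opens E), ℝ) :=
    ⟨fun t => g (-t), hg.comp contDiff_neg, hgc.comp_homeomorph (.neg E), by simp⟩
  have hφ (w : E) : (φ ⋆[lsmul ℝ ℝ] F) w = ∫ t, g t • F (w + t) := by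
    rw [← integral_neg_eq_self]
    simp only [← sub_eq_add_neg]
    rfl
  have hφN := hκN _ (φ.hasCompactSupport.contDiff_convolution_left (lsmul ℝ ℝ) φ.contDiff
    hFc.locallyIntegrable) (hF.iterate_laplacian_convolution hFc.locallyIntegrable φ) 0 R
  calc ∫ t, g t • ∫ z, κ z • F (t - R • z)
      = ∫ t, ∫ z, g t • κ z • F (t - R • z) := by simp only [integral_smul]
    _ = ∫ z, ∫ t, g t • κ z • F (t - R • z) := by
        refine integral_integral_swap_of_hasCompactSupport
          (by unfold Function.uncurry; have := hg.continuous; fun_prop)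
          (.intro (hgc.prod hκc) fun p hp => ?_)
        by_cases hp1 : p.1 ∈ tsupport g
        · simp [Function.uncurry, image_eq_zero_of_notMem_tsupport fun h => hp ⟨hp1, h⟩]
        · simp [Function.uncurry, image_eq_zero_of_notMem_tsupport hp1]
    _ = ∫ z, κ z • ∫ t, g t • F (0 - R • z + t) := by
        simp only [← integral_smul, smul_comm (κ _), zero_sub, neg_add_eq_sub]
    _ = ∫ t, g t • F t := by simpa only [hφ, zero_add] using hφN

theorem WeaklyPolyharmonic.contDiff [CompleteSpace V] {N : ℕ} {F : E → V}
    (hF : WeaklyPolyharmonic N F) (hFc : Continuous F) : ContDiff ℝ ∞ F := by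
  obtain ⟨κ, hκ, hκc, hκN⟩ := exists_reproducing_kernel_of_iterate_laplacian_eq_zero E V N
  have hconv : κ ⋆[lsmul ℝ ℝ] F = F := by
    ext x
    simpa [convolution_def] using hF.integral_smul_eq hκ.continuous hκc hκN hFc x 1
  rw [← hconv]
  exact hκc.contDiff_convolution_left _ hκ hFc.locallyIntegrable

end ReproducingKernel

section Liouville

variable {E V : Type*} [NormedAddCommGroup E] [InnerProductSpace ℝ E] [FiniteDimensional ℝ E]
  [MeasurableSpace E] [BorelSpace E] [NormedAddCommGroup V] [NormedSpace ℝ V]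

theorem pow_smul_iteratedDirDeriv_eq_integral {κ : E → ℝ} (hκ : ContDiff ℝ ∞ κ)
    (hκc : HasCompactSupport κ) {F : E → V} (hFc : Continuous F)
    (hF : ∀ x (R : ℝ), ∫ z, κ z • F (x - R • z) = F x) (L : List E) {R : ℝ} (hR : R ≠ 0) (x : E) :
    R ^ L.length • iteratedDirDeriv L F x = ∫ z, iteratedDirDeriv L κ z • F (x - R • z) := by
  have hconv : κ ⋆[lsmul ℝ ℝ] (fun y => F (R • y)) = fun y => F (R • y) := by
    ext y
    simp [convolution_def, smul_sub, hF]
  have hderiv := congrFun (iteratedDirDeriv_convolution hκ hκc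
    (hFc.comp (continuous_const_smul R)).locallyIntegrable (μ := volume) L) (R⁻¹ • x)
  rw [Function.comp_def] at hderiv
  simpa [hconv, iteratedDirDeriv_comp_smul, convolution_def, smul_sub, smul_inv_smul₀ hR]
    using hderiv

theorem norm_integral_smul_comp_sub_smul_le {K : E → ℝ} {B S : ℝ} (hB : ∀ z, ‖K z‖ ≤ B)
    (hS : ∀ z, K z ≠ 0 → ‖z‖ ≤ S) {F : E → V} (hF : Continuous F) {R : ℝ} (hR : 0 < R) {x : E}
    (hx : ‖x‖ < R) : ‖∫ z, K z • F (x - R • z)‖ ≤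
      B * (R ^ Module.finrank ℝ E)⁻¹ * ∫ y in ball 0 ((S + 1) * R), ‖F y‖ := by
  let h : E → ℝ := (ball 0 ((S + 1) * R)).indicator fun y => ‖F y‖
  have hh : Integrable h := integrable_indicator_iff measurableSet_ball |>.2
    (integrableOn_ball_of_continuous hF.norm _ _)
  have hle (z : E) : ‖K z • F (x - R • z)‖ ≤ B * h (x - R • z) := by
    by_cases hz : K z = 0
    · simpa [hz] using mul_nonneg ((norm_nonneg _).trans (hB z))
        (Set.indicator_nonneg (fun _ _ => norm_nonneg _) _)
    · have hmem : x - R • z ∈ ball 0 ((S + 1) * R) := by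
        rw [mem_ball_zero_iff]
        have := norm_sub_le x (R • z)
        rw [norm_smul, Real.norm_of_nonneg hR.le] at this
        nlinarith [hS z hz]
      rw [norm_smul, show h (x - R • z) = _ from Set.indicator_of_mem hmem _]
      exact mul_le_mul_of_nonneg_right (hB z) (norm_nonneg _)
  refine (norm_integral_le_of_norm_le (((hh.comp_sub_left x).comp_smul hR.ne').const_mul B)
    (.of_forall hle)).trans_eq ?_
  rw [integral_const_mul,
    Measure.integral_comp_smul_of_nonneg _ (fun y => h (x - y)) R (hR := hR.le),
    integral_sub_left_eq_self h volume x, integral_indicator measurableSet_ball, smul_eq_mul,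
    mul_assoc]

theorem WeaklyPolyharmonic.iteratedDirDeriv_eq_zero_of_isLittleO [CompleteSpace V] {N l : ℕ}
    {F : E → V} (hF : WeaklyPolyharmonic N F) (hFc : Continuous F)
    (hgrow : (fun R : ℝ => ∫ y in ball 0 R, ‖F y‖) =o[atTop]
      fun R : ℝ => R ^ (l + Module.finrank ℝ E)) {L : List E} (hL : L.length = l) :
    iteratedDirDeriv L F = 0 := by
  obtain ⟨κ, hκ, hκc, hκN⟩ := exists_reproducing_kernel_of_iterate_laplacian_eq_zero E V N
  have hdc : HasCompactSupport (iteratedDirDeriv L κ) := hasCompactSupport_iteratedDirDeriv hκc L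
  obtain ⟨B, hB⟩ := hdc.exists_bound_of_continuous (contDiff_iteratedDirDeriv hκ L).continuous
  obtain ⟨S, hS0, hS⟩ := hdc.isBounded.exists_pos_norm_le
  ext x
  have hbound : ∀ᶠ R : ℝ in atTop, ‖iteratedDirDeriv L F x‖ ≤
      B * (S + 1) ^ (l + Module.finrank ℝ E) * ((∫ y in ball 0 ((S + 1) * R), ‖F y‖) /
        ((S + 1) * R) ^ (l + Module.finrank ℝ E)) := by
    filter_upwards [eventually_gt_atTop ‖x‖] with R hR
    have hR0 : 0 < R := (norm_nonneg x).trans_lt hR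
    have hle := norm_integral_smul_comp_sub_smul_le hB (fun z hz => hS z (subset_tsupport _ hz))
      hFc hR0 hR
    rw [← pow_smul_iteratedDirDeriv_eq_integral hκ hκc hFc
      (hF.integral_smul_eq hκ.continuous hκc hκN hFc) L hR0.ne', norm_smul, hL,
      Real.norm_of_nonneg (by positivity)] at hle
    refine (le_div_iff₀' (pow_pos hR0 l)).2 hle |>.trans_eq ?_
    rw [mul_pow, pow_add R]
    field_simp
  have hlim := (hgrow.tendsto_div_nhds_zero.comp
    (tendsto_id.const_mul_atTop (by positivity : 0 < S + 1))).const_mul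
      (B * (S + 1) ^ (l + Module.finrank ℝ E))
  rw [mul_zero] at hlim
  exact norm_le_zero_iff.1 (ge_of_tendsto hlim hbound)

end Liouville

section BosonicLaplacian

open MvPolynomial

variable {m : ℕ} {V : Type*} [NormedAddCommGroup V] [NormedSpace ℝ V]

/-- `g x v` is the value at `v` of the polynomial `p (F x)`, for `v` in the unit ball. Keeping the
linear parametrization `p` of the polynomials separate from the coefficients `F x` lets `∂_x` act on
`F` alone and `∂_v` on `p` alone. -/
def IsPolyExpansion (p : V →ₗ[ℝ] MvPolynomial (Fin m) ℝ) (F : Evec m → V)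
    (g : Evec m → Evec m → ℝ) : Prop :=
  ∀ x, ∀ v ∈ ball (0 : Evec m) 1, g x v = eval ⇑v (p (F x))

namespace IsPolyExpansion

variable {p : V →ₗ[ℝ] MvPolynomial (Fin m) ℝ} {F : Evec m → V} {g : Evec m → Evec m → ℝ}

theorem pd2 (h : IsPolyExpansion p F g) (j : Fin m) :
    IsPolyExpansion ((pderiv j).toLinearMap ∘ₗ p) F (pd2 j g) := by
  intro x v hv
  have heq : (fun w => g x w) =ᶠ[𝓝 v] fun w => eval ⇑w (p (F x)) := by
    filter_upwards [isOpen_ball.mem_nhds hv] with w hw using h x w hw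
  rw [_root_.pd2, heq.fderiv_eq, fderiv_eval_single]
  rfl

variable [FiniteDimensional ℝ V]

theorem pd1 (h : IsPolyExpansion p F g) (hF : Differentiable ℝ F) (j : Fin m) :
    IsPolyExpansion p (fun x => fderiv ℝ F x (EuclideanSpace.single j 1)) (pd1 j g) := by
  intro x v hv
  let ℓ : V →L[ℝ] ℝ := LinearMap.toContinuousLinearMap (evalDual p v)
  have hℓ (w : V) : ℓ w = eval ⇑v (p w) := evalDual_apply p v w
  have heq : (fun y => g y v) = ℓ ∘ F := funext fun y => (h y v hv).trans (hℓ _).symm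
  rw [_root_.pd1, heq, (ℓ.hasFDerivAt.comp x (hF x).hasFDerivAt).fderiv, ← hℓ]
  rfl

theorem eval_bosonicSymbol (h : IsPolyExpansion p F g) (hF : ContDiff ℝ 2 F) {k : ℕ}
    (ha : ((m : ℝ) + 2 * k - 2) * (m + 2 * k - 4) ≠ 0) (x : Evec m) {v : Evec m}
    (hv : v ∈ ball (0 : Evec m) 1) :
    eval ⇑v (bosonicSymbol ((m : ℝ) + 2 * k - 2) fun i j =>
      p (iteratedDirDeriv [EuclideanSpace.single i 1, EuclideanSpace.single j 1] F x)) =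
    ((m : ℝ) + 2 * k - 2) * (m + 2 * k - 4) * Dk m k g x v := by
  have hF0 : Differentiable ℝ F := hF.differentiable two_ne_zero
  have hF1 (j : Fin m) : Differentiable ℝ fun x => fderiv ℝ F x (EuclideanSpace.single j 1) :=
    (contDiff_fderiv_apply_const (n := 1) (by simpa [one_add_one_eq_two] using hF) _).differentiable
      one_ne_zero
  have hxx i : _root_.pd1 i (_root_.pd1 i g) x v = _ := ((h.pd1 hF0 i).pd1 (hF1 i) i) x v hv
  have hxux i j : _root_.pd1 i (_root_.pd2 j (_root_.pd1 j g)) x v = _ :=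
    (((h.pd1 hF0 j).pd2 j).pd1 (hF1 j) i) x v hv
  have huxux i j : _root_.pd2 i (_root_.pd1 i (_root_.pd2 j (_root_.pd1 j g))) x v = _ :=
    ((((h.pd1 hF0 j).pd2 j).pd1 (hF1 j) i).pd2 i) x v hv
  have ha1 := left_ne_zero_of_mul ha
  have ha2 := right_ne_zero_of_mul ha
  simp only [Dk, hxx, hxux, huxux, bosonicSymbol_apply, iteratedDirDeriv_cons, iteratedDirDeriv_nil,
    map_add, map_sub, map_sum, map_mul, map_pow, smul_eval, eval_X,
    EuclideanSpace.real_norm_sq_eq, LinearMap.comp_apply, Derivation.coeFn_coe]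
  field_simp
  ring

end IsPolyExpansion

end BosonicLaplacian

section WeakBosonicLaplacian

open MvPolynomial TopologicalSpace
open scoped Distributions LineDeriv

section Convolution

variable {E V : Type*} [NormedAddCommGroup E] [MeasurableSpace E] {μ : Measure E}
  [NormedAddCommGroup V] [NormedSpace ℝ V]

theorem map_convolution_eq_zero [FiniteDimensional ℝ V] {U : Type*} [AddCommGroup U] [Module ℝ U]
    {Λ : V →ₗ[ℝ] U} {φ : E → ℝ} {B : E → V} (hB : ∀ y, Λ (B y) = 0) (x : E) :
    Λ ((φ ⋆[lsmul ℝ ℝ, μ] B) x) = 0 := by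
  let B' (y : E) : LinearMap.ker Λ := ⟨B y, hB y⟩
  have hker : (φ ⋆[lsmul ℝ ℝ, μ] B) x = (∫ t, φ t • B' (x - t) ∂μ : LinearMap.ker Λ) :=
    (LinearMap.ker Λ).subtypeₗᵢ.integral_comp_comm fun t => φ t • B' (x - t)
  rw [hker]
  exact (∫ t, φ t • B' (x - t) ∂μ).2

variable [NormedSpace ℝ E] [FiniteDimensional ℝ E] [BorelSpace E] [μ.IsAddHaarMeasure]

theorem convolution_pi_apply {ι : Type*} [Fintype ι] {V : ι → Type*}
    [∀ i, NormedAddCommGroup (V i)] [∀ i, NormedSpace ℝ (V i)] [∀ i, CompleteSpace (V i)]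
    {φ : E → ℝ} (hφ : Continuous φ)
    (hφc : HasCompactSupport φ) {B : E → ∀ i, V i} (hB : Continuous B) (x : E) (i : ι) :
    (φ ⋆[lsmul ℝ ℝ, μ] B) x i = (φ ⋆[lsmul ℝ ℝ, μ] fun y => B y i) x :=
  ((ContinuousLinearMap.proj (R := ℝ) i).integral_comp_comm
    (hφc.convolutionExists_left (lsmul ℝ ℝ) hφ hB.locallyIntegrable x)).symm

/-- Convolution with `F`, evaluated at `x`, as a `V`-valued linear form on test functions. -/
def convolutionAt {F : E → V} (hF : LocallyIntegrable F μ) (x : E) :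
    𝓓((⊤ : Opens E), ℝ) →ₗ[ℝ] V where
  toFun φ := (φ ⋆[lsmul ℝ ℝ, μ] F) x
  map_add' φ ψ := by
    have hex (χ : 𝓓((⊤ : Opens E), ℝ)) : ConvolutionExists χ F (lsmul ℝ ℝ) μ :=
      χ.hasCompactSupport.convolutionExists_left _ χ.contDiff.continuous hF
    exact congrFun ((hex φ).add_distrib (hex ψ)) x
  map_smul' c φ := congrFun smul_convolution x

theorem convolutionAt_lineDerivOp_lineDerivOp {F : E → V} (hF : ContDiff ℝ 2 F) (x v w : E)
    (φ : 𝓓((⊤ : Opens E), ℝ)) :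
    convolutionAt (μ := μ) hF.continuous.locallyIntegrable x (∂_{w} (∂_{v} φ)) =
      (φ ⋆[lsmul ℝ ℝ, μ] iteratedDirDeriv [v, w] F) x := by
  have hle {χ : 𝓓((⊤ : Opens E), ℝ)} : ContDiff ℝ 1 χ := χ.contDiff.of_le (by simp)
  refine congrFun (?_ : ⇑(∂_{w} (∂_{v} φ) : 𝓓((⊤ : Opens E), ℝ)) ⋆[lsmul ℝ ℝ, μ] F = _) x
  rw [coe_lineDerivOp_testFunction w,
    convolution_fderiv_apply hle (∂_{v} φ : 𝓓((⊤ : Opens E), ℝ)).hasCompactSupport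
      (hF.of_le (by norm_num)),
    coe_lineDerivOp_testFunction v, convolution_fderiv_apply hle φ.hasCompactSupport
      (contDiff_fderiv_apply_const (n := 1) (by norm_num; exact hF) w)]
  rfl

end Convolution

variable {σ V : Type*} [Fintype σ] [DecidableEq σ] [NormedAddCommGroup V] [NormedSpace ℝ V]
  [FiniteDimensional ℝ V]

theorem laplacianCLM_testFunction_iterate_eq (n : ℕ) (φ : 𝓓((⊤ : Opens (EuclideanSpace ℝ σ)), ℝ)) :
    (LineDeriv.laplacianCLM ℝ (EuclideanSpace ℝ σ) 𝓓((⊤ : Opens (EuclideanSpace ℝ σ)), ℝ))^[n] φ =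
    ((∑ i : σ, (LineDeriv.lineDerivOpCLM ℝ 𝓓((⊤ : Opens (EuclideanSpace ℝ σ)), ℝ)
      (EuclideanSpace.single i (1 : ℝ))).toLinearMap ^ 2) ^ n) φ := by
  rw [Module.End.pow_apply]
  refine congrArg (fun A => A^[n] φ) (funext fun ψ => ?_)
  rw [LineDeriv.laplacianCLM_eq_sum (EuclideanSpace.basisFun σ ℝ)]
  simp [pow_two, LinearMap.sum_apply]

theorem bosonicSymbol_convolutionAt_eq_zero {p : V →ₗ[ℝ] MvPolynomial σ ℝ} {a : ℝ}
    {F : EuclideanSpace ℝ σ → V} (hF : ContDiff ℝ 2 F)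
    (h : ∀ x, bosonicSymbol a (fun i j =>
      p (iteratedDirDeriv [EuclideanSpace.single i 1, EuclideanSpace.single j 1] F x)) = 0)
    (x : EuclideanSpace ℝ σ) (φ : 𝓓((⊤ : Opens (EuclideanSpace ℝ σ)), ℝ)) :
    bosonicSymbol a (fun i j =>
      p (convolutionAt (μ := volume) hF.continuous.locallyIntegrable x
        (∂_{EuclideanSpace.single j (1 : ℝ)} (∂_{EuclideanSpace.single i (1 : ℝ)} φ)))) = 0 := by
  let hess (y : EuclideanSpace ℝ σ) (ij : σ × σ) : V :=
    iteratedDirDeriv [EuclideanSpace.single ij.1 1, EuclideanSpace.single ij.2 1] F y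
  have hhess : Continuous hess := continuous_pi fun _ => continuous_iteratedDirDeriv_pair hF _ _
  let Λ : (σ × σ → V) →ₗ[ℝ] MvPolynomial σ ℝ :=
    bosonicSymbol a ∘ₗ (LinearEquiv.curry ℝ _ σ σ).toLinearMap ∘ₗ p.compLeft (σ × σ)
  have hΛ (y : EuclideanSpace ℝ σ) : Λ (hess y) = 0 := h y
  have hconv : Λ ((φ ⋆[lsmul ℝ ℝ, volume] hess) x) = 0 := map_convolution_eq_zero hΛ x
  refine Eq.trans (congrArg (bosonicSymbol a) ?_) hconv
  ext1 i
  ext1 j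
  rw [convolutionAt_lineDerivOp_lineDerivOp hF]
  exact congrArg p (convolution_pi_apply φ.contDiff.continuous φ.hasCompactSupport hhess x
    (i, j)).symm

theorem weaklyPolyharmonic_of_bosonicSymbol_eq_zero {p : V →ₗ[ℝ] MvPolynomial σ ℝ}
    (hp : Function.Injective p) {k : ℕ} (hdeg : ∀ w, (p w).totalDegree ≤ k) {a : ℝ}
    (ha : ∀ n ≤ k, (a - 2 * n) * (a - 2 - 2 * n) ≠ 0) {F : EuclideanSpace ℝ σ → V}
    (hF : ContDiff ℝ 2 F)
    (h : ∀ x, bosonicSymbol a (fun i j =>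
      p (iteratedDirDeriv [EuclideanSpace.single i 1, EuclideanSpace.single j 1] F x)) = 0) :
    WeaklyPolyharmonic (k + 1) F := by
  intro φ
  ext x
  let d (i : σ) : Module.End ℝ 𝓓((⊤ : Opens (EuclideanSpace ℝ σ)), ℝ) :=
    (LineDeriv.lineDerivOpCLM ℝ _ (EuclideanSpace.single i (1 : ℝ))).toLinearMap
  have hcomm i j : Commute (d i) (d j) :=
    LinearMap.ext fun ψ => lineDerivOp_testFunction_comm _ _ ψ
  let T : 𝓓((⊤ : Opens (EuclideanSpace ℝ σ)), ℝ) →ₗ[ℝ] MvPolynomial σ ℝ :=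
    p ∘ₗ convolutionAt (μ := volume) hF.continuous.locallyIntegrable x
  have hbos ψ : bosonicSymbol a (fun i j => T (d j (d i ψ))) = 0 :=
    bosonicSymbol_convolutionAt_eq_zero hF h x ψ
  have hT : T (((∑ i, d i ^ 2) ^ (k + 1)) φ) = 0 :=
    laplacian_pow_eq_zero_of_bosonic hcomm ha (fun _ => hdeg _) hbos φ
  rw [laplacianCLM_testFunction_iterate_eq]
  exact hp (hT.trans (map_zero p).symm)

end WeakBosonicLaplacian

section Fibres

open MvPolynomial

theorem contDiff_of_span_dual_eq_top {E V : Type*} [NormedAddCommGroup E] [NormedSpace ℝ E]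
    [NormedAddCommGroup V] [NormedSpace ℝ V] [FiniteDimensional ℝ V] {n : WithTop ℕ∞}
    {S : Set (Module.Dual ℝ V)} (hS : Submodule.span ℝ S = ⊤) {F : E → V}
    (hF : ∀ g ∈ S, ContDiff ℝ n fun x => g (F x)) : ContDiff ℝ n F := by
  have hdual (g : Module.Dual ℝ V) : ContDiff ℝ n fun x => g (F x) := by
    have hg : g ∈ Submodule.span ℝ S := hS ▸ Submodule.mem_top
    induction hg using Submodule.span_induction with
    | mem g hg => exact hF g hg
    | zero => exact contDiff_const
    | add g h _ _ hg hh => exact hg.add hh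
    | smul c g _ hg => exact contDiff_const.mul hg
  let b := Module.finBasis ℝ V
  rw [← b.equivFunL.comp_contDiff_iff]
  exact contDiff_pi.mpr fun i => hdual (b.coord i)

variable {m k : ℕ} {f : Evec m → Evec m → ℝ}

theorem exists_isPolyExpansion {V : Type*} [NormedAddCommGroup V] [NormedSpace ℝ V]
    [FiniteDimensional ℝ V] {p : V →ₗ[ℝ] MvPolynomial (Fin m) ℝ} (hp : Function.Injective p)
    {n : WithTop ℕ∞}
    (hreg : ContDiffOn ℝ n (fun q : Evec m × Evec m => f q.1 q.2) (Set.univ ×ˢ ball 0 1))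
    (hpoly : ∀ x, ∃ P ∈ LinearMap.range p, ∀ u ∈ ball (0 : Evec m) 1, f x u = eval ⇑u P) :
    ∃ F : Evec m → V, ContDiff ℝ n F ∧ IsPolyExpansion p F f := by
  choose P hrange hP using hpoly
  choose F hF using hrange
  have hpF : IsPolyExpansion p F f := fun x u hu => (hP x u hu).trans (by rw [hF])
  refine ⟨F, contDiff_of_span_dual_eq_top (span_evalDual_ball_eq_top hp) ?_, hpF⟩
  rintro _ ⟨u, hu, rfl⟩
  simp only [evalDual_apply, ← hpF _ u hu]
  exact contDiffOn_univ.mp <| hreg.comp (contDiff_id.prodMk contDiff_const).contDiffOn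
    fun x _ => ⟨Set.mem_univ x, hu⟩

theorem IsPolyExpansion.norm_eq {F : Evec m → polyL1LE (Fin m) k}
    (h : IsPolyExpansion (polyOfL1 (Fin m) k) F f) (x : Evec m) :
    ‖F x‖ = ∫ ν in ball (0 : Evec m) 1, |f x ν| := by
  rw [norm_polyL1LE]
  exact setIntegral_congr_fun measurableSet_ball fun u hu => congrArg abs (h x u hu).symm

theorem IsPolyExpansion.weaklyPolyharmonic {V : Type*} [NormedAddCommGroup V] [NormedSpace ℝ V]
    [FiniteDimensional ℝ V] {p : V →ₗ[ℝ] MvPolynomial (Fin m) ℝ} {F : Evec m → V}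
    (h : IsPolyExpansion p F f) (hp : Function.Injective p) (hdeg : ∀ w, (p w).totalDegree ≤ k)
    (hF : ContDiff ℝ 2 F) (hm : Odd m ∨ 4 < m)
    (hD : ∀ x : Evec m, ∀ ν ∈ ball (0 : Evec m) 1, Dk m k f x ν = 0) :
    WeaklyPolyharmonic (k + 1) F := by
  have ha : ∀ n ≤ k, ((m : ℝ) + 2 * k - 2 - 2 * n) * ((m : ℝ) + 2 * k - 2 - 2 - 2 * n) ≠ 0 := by
    intro n hn
    refine mod_cast (?_ : ((m : ℤ) + 2 * k - 2 - 2 * n) * (m + 2 * k - 2 - 2 - 2 * n) ≠ 0)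
    rw [Nat.odd_iff] at hm
    exact mul_ne_zero (by lia) (by lia)
  have ha0 : ((m : ℝ) + 2 * k - 2) * (m + 2 * k - 4) ≠ 0 := by
    convert ha 0 k.zero_le using 2 <;> push_cast <;> ring
  refine weaklyPolyharmonic_of_bosonicSymbol_eq_zero hp hdeg ha hF fun x => ?_
  refine eq_zero_of_eval_ball_eq_zero fun v hv => ?_
  rw [h.eval_bosonicSymbol hF ha0 x hv, hD x v hv, mul_zero]

end Fibres

section MultiIndices

variable {m : ℕ}

theorem iterate_pd1_apply (i : Fin m) (n : ℕ) (g : Evec m → Evec m → ℝ) (ν : Evec m) :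
    (fun x => (pd1 i)^[n] g x ν) =
      iteratedDirDeriv (List.replicate n (EuclideanSpace.single i 1)) fun x => g x ν := by
  induction n with
  | zero => rfl
  | succ n ih =>
    rw [List.replicate_succ, iteratedDirDeriv_cons, ← ih, Function.iterate_succ_apply']
    rfl

/-- The directions of differentiation in `D_x^α`, with multiplicity. -/
def multiIndexDirs (α : Fin m → ℕ) : List (Evec m) :=
  (List.finRange m).flatMap fun i => List.replicate (α i) (EuclideanSpace.single i 1)

theorem length_multiIndexDirs (α : Fin m → ℕ) : (multiIndexDirs α).length = ∑ i, α i := by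
  simp [multiIndexDirs, List.length_flatMap, ← List.sum_ofFn, List.ofFn_eq_map]

theorem Dx_eq_iteratedDirDeriv (α : Fin m → ℕ) (f : Evec m → Evec m → ℝ) (ν : Evec m) :
    (fun x => Dx α f x ν) = iteratedDirDeriv (multiIndexDirs α) fun x => f x ν := by
  unfold Dx multiIndexDirs
  induction List.finRange m with
  | nil => rfl
  | cons i L ih =>
    rw [List.flatMap_cons, iteratedDirDeriv, List.foldr_append, List.foldr_cons, iterate_pd1_apply,
      ih]
    rfl

end MultiIndices

theorem C2Hk.exists_totalDegree_le {m k : ℕ} {Ω : Set (Evec m)} {f : Evec m → Evec m → ℝ}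
    (hf : C2Hk m k Ω f) {x : Evec m} (hx : x ∈ Ω) :
    ∃ P : MvPolynomial (Fin m) ℝ, P.totalDegree ≤ k ∧
      ∀ u ∈ ball (0 : Evec m) 1, f x u = MvPolynomial.eval ⇑u P := by
  obtain ⟨q, hq, hfq⟩ := hf.2 x hx
  obtain ⟨P, hP, hqP⟩ := hq.exists_totalDegree_le
  exact ⟨P, hP, fun u hu => (hfq u (ball_subset_closedBall hu)).trans (hqP u)⟩

theorem stmt_18_general {m k l : ℕ} (hm : Odd m ∨ 4 < m) {f : Evec m → Evec m → ℝ}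
    (hreg : ContDiffOn ℝ 2 (fun q : Evec m × Evec m => f q.1 q.2) (Set.univ ×ˢ ball 0 1))
    (hpoly : ∀ x, ∃ P : MvPolynomial (Fin m) ℝ, P.totalDegree ≤ k ∧
      ∀ u ∈ ball (0 : Evec m) 1, f x u = MvPolynomial.eval ⇑u P)
    (hD : ∀ x : Evec m, ∀ ν ∈ ball (0 : Evec m) 1, Dk m k f x ν = 0)
    (hgrow :
      (fun R : ℝ => ∫ x in ball (0 : Evec m) R, ∫ ν in ball (0 : Evec m) 1, |f x ν|)
        =o[atTop] fun R : ℝ => R ^ (l + m)) (α : Fin m → ℕ) (hα : ∑ i, α i = l)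
    (x ν : Evec m) (hν : ‖ν‖ < 1) : Dx α f x ν = 0 := by
  have hmem (P : MvPolynomial (Fin m) ℝ) :
      P ∈ LinearMap.range (polyOfL1 (Fin m) k) ↔ P.totalDegree ≤ k := by
    rw [range_polyOfL1, MvPolynomial.mem_restrictTotalDegree]
  obtain ⟨F, hF, hfF⟩ := exists_isPolyExpansion (polyOfL1_injective k) hreg
    (by simpa only [hmem] using hpoly)
  have hpolyharmonic : WeaklyPolyharmonic (k + 1) F :=
    hfF.weaklyPolyharmonic (polyOfL1_injective k) (fun w => (hmem _).mp ⟨w, rfl⟩) hF hm hD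
  have hvanish : iteratedDirDeriv (multiIndexDirs α) F = 0 :=
    hpolyharmonic.iteratedDirDeriv_eq_zero_of_isLittleO hF.continuous
      (by simpa only [hfF.norm_eq, finrank_euclideanSpace_fin] using hgrow)
      ((length_multiIndexDirs α).trans hα)
  let evalν : polyL1LE (Fin m) k →L[ℝ] ℝ :=
    LinearMap.toContinuousLinearMap (evalDual (polyOfL1 (Fin m) k) ν)
  have hfν : (fun y => f y ν) = fun y => evalν (F y) :=
    funext fun y => (hfF y ν (mem_ball_zero_iff.mpr hν)).trans (evalDual_apply _ ν (F y)).symm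
  refine (congrFun (Dx_eq_iteratedDirDeriv α f ν) x).trans ?_
  rw [hfν, iteratedDirDeriv_clm_apply evalν (hpolyharmonic.contDiff hF.continuous), hvanish]
  exact map_zero evalν

/-- polynomial growth implies polynomial, `m > 4`. -/
theorem stmt_18 (m k : ℕ) (hm : 4 < m) (hk : 1 ≤ k) (l : ℕ) (hl : 1 ≤ l)
    (f : Evec m → Evec m → ℝ)
    (hreg : C2Hk m k Set.univ f)
    (hD : ∀ x : Evec m, ∀ ν ∈ ball (0 : Evec m) 1, Dk m k f x ν = 0)
    (hgrow :
      (fun R : ℝ => ∫ x in ball (0 : Evec m) R, ∫ ν in ball (0 : Evec m) 1, |f x ν|)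
        =o[atTop] fun R : ℝ => R ^ (l + m)) :
    ∀ α : Fin m → ℕ, (∑ i, α i) = l →
      ∀ x ν : Evec m, ‖ν‖ < 1 → Dx α f x ν = 0 :=
  stmt_18_general (.inr hm) hreg.1 (fun _ => hreg.exists_totalDegree_le trivial) hD hgrow
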